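/- arXiv:1711.04649 — 2 statements merged into one kernel-verified Lean document; each statement's English description precedes it below -/
import Mathlib

section
/- Let K be a number field and S a finite set of places of K containing all the archimedean ones. Let Q₁, Q₂, Q₃ be three distinct points in ℙ¹(K). Then the set 𝒯 = { P ∈ ℙ¹(K) : δ_𝔭(P,Q₁) = δ_𝔭(P,Q₂) = δ_𝔭(P,Q₃) for all primes 𝔭 ∉ S } is finite, with cardinality at most B(|S|) = 2^{16|S|}. -/
open NumberField IsDedekindDomain MvPolynomial
open scoped Classical nonZeroDivisors

set_option synthInstance.maxHeartbeats 1000000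
set_option maxHeartbeats 1000000

noncomputable section

/-- The projective line over `K`. -/
abbrev P1 (K : Type*) [Field K] := Projectivization K (Fin 2 → K)

variable {K : Type*} [Field K] [NumberField K]

/-- The additive `v`-adic valuation (order) of `x ∈ K`, with junk value `0` at `x = 0`,
normalized so that it is surjective onto `ℤ`. -/
def ordAt (v : HeightOneSpectrum (𝓞 K)) (x : K) : ℤ :=
  if hx : x = 0 then 0
  else - Multiplicative.toAdd (WithZero.unzero ((v.valuation K).ne_zero_iff.mpr hx))

/-- `min (v(x), v(y))` for a pair of coordinates, not both zero. -/
def minOrd (v : HeightOneSpectrum (𝓞 K)) (x y : K) : ℤ :=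
  if x = 0 then ordAt v y else if y = 0 then ordAt v x else min (ordAt v x) (ordAt v y)

/-- The `v`-adic logarithmic distance between two points of `ℙ¹(K)`:
`δ_v(P,Q) = v(x₁y₂ - x₂y₁) - min(v x₁, v y₁) - min(v x₂, v y₂)`, with value `⊤` when `P = Q`
(it is independent of the choice of homogeneous coordinates, so we compute it on the chosen
representatives). -/
def logDist (v : HeightOneSpectrum (𝓞 K)) (P Q : P1 K) : WithTop ℤ :=
  if P = Q then ⊤
  else ((ordAt v (P.rep 0 * Q.rep 1 - P.rep 1 * Q.rep 0)
        - minOrd v (P.rep 0) (P.rep 1) - minOrd v (Q.rep 0) (Q.rep 1) : ℤ) : WithTop ℤ)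

/-- An endomorphism of `ℙ¹` of degree `d` defined over `K`, given by a pair of homogeneous
forms of degree `d` with no common zero over the algebraic closure, together with the induced
self-map of `ℙ¹(K)`. -/
structure P1Map (K : Type*) [Field K] (d : ℕ) where
  toFun : P1 K → P1 K
  F : MvPolynomial (Fin 2) K
  G : MvPolynomial (Fin 2) K
  homF : F.IsHomogeneous d
  homG : G.IsHomogeneous d
  coprime : ∀ x y : AlgebraicClosure K,
    aeval ![x, y] F = 0 → aeval ![x, y] G = 0 → x = 0 ∧ y = 0
  compat : ∀ (x y : K) (hxy : ![x, y] ≠ 0)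
    (h : ![eval ![x, y] F, eval ![x, y] G] ≠ 0),
    toFun (Projectivization.mk K ![x, y] hxy) =
      Projectivization.mk K ![eval ![x, y] F, eval ![x, y] G] h

variable {d : ℕ}

/-- `φ` has good reduction at the finite place `v`: some representing pair of forms has
coefficients in the valuation ring at `v`, not all in the maximal ideal, and the reductions
of the two forms modulo `v` have no common zero in `ℙ¹` of the algebraic closure of the
residue field. -/
def GoodReductionAt (φ : P1Map K d) (v : HeightOneSpectrum (𝓞 K)) : Prop :=
  ∃ c : K, c ≠ 0 ∧
    ∃ F₀ G₀ : MvPolynomial (Fin 2) (v.valuation (K := K)).valuationSubring,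
      MvPolynomial.map ((v.valuation (K := K)).valuationSubring.subtype) F₀ = C c * φ.F ∧
      MvPolynomial.map ((v.valuation (K := K)).valuationSubring.subtype) G₀ = C c * φ.G ∧
      ((∃ m, F₀.coeff m ∉ IsLocalRing.maximalIdeal (v.valuation (K := K)).valuationSubring) ∨
        (∃ m, G₀.coeff m ∉ IsLocalRing.maximalIdeal (v.valuation (K := K)).valuationSubring)) ∧
      ∀ x y : AlgebraicClosure
          (IsLocalRing.ResidueField (v.valuation (K := K)).valuationSubring),
        eval ![x, y] (MvPolynomial.map
          ((algebraMap (IsLocalRing.ResidueField (v.valuation (K := K)).valuationSubring)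
              (AlgebraicClosure _)).comp
            (IsLocalRing.residue _)) F₀) = 0 →
        eval ![x, y] (MvPolynomial.map
          ((algebraMap (IsLocalRing.ResidueField (v.valuation (K := K)).valuationSubring)
              (AlgebraicClosure _)).comp
            (IsLocalRing.residue _)) G₀) = 0 →
        x = 0 ∧ y = 0

/-- `φ` has good reduction outside `S`, where `S` consists of all archimedean places together
with the finite places in `T`. -/
def GoodReductionOutside (φ : P1Map K d) (T : Finset (HeightOneSpectrum (𝓞 K))) : Prop :=
  ∀ v ∉ T, GoodReductionAt φ v

/-- `P` is a periodic point of `φ`. -/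
def IsPeriodicPoint (φ : P1Map K d) (P : P1 K) : Prop :=
  ∃ n, 0 < n ∧ φ.toFun^[n] P = P

/-- `P` is a preperiodic point of `φ`. -/
def IsPreperiodicPoint (φ : P1Map K d) (P : P1 K) : Prop :=
  ∃ m, IsPeriodicPoint φ (φ.toFun^[m] P)

/-- `P` is a tail point of `φ`: preperiodic but not periodic. -/
def IsTailPoint (φ : P1Map K d) (P : P1 K) : Prop :=
  IsPreperiodicPoint φ P ∧ ¬ IsPeriodicPoint φ P

/-- The set `Tail(φ,K,P)` of `K`-rational tail points of `P`: non-periodic points having `P`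
in their forward orbit. -/
def TailOf (φ : P1Map K d) (P : P1 K) : Set (P1 K) :=
  {Q | ¬ IsPeriodicPoint φ Q ∧ ∃ n, φ.toFun^[n] Q = P}

/-- `P = [a:b]` is a critical point of `φ = [F:G]`: the algebraic condition
`φ([x:y]) = φ([a:b])`, i.e. the form `G(a,b)·F(X,Y) - F(a,b)·G(X,Y)`, vanishes to order
at least `2` at `[a:b]`. -/
def IsCriticalPt (φ : P1Map K d) (P : P1 K) : Prop :=
  ∃ (a b : K) (hab : ![a, b] ≠ 0), P = Projectivization.mk K ![a, b] hab ∧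
    (C b * X 0 - C a * X 1) ^ 2 ∣
      (C (eval ![a, b] φ.G) * φ.F - C (eval ![a, b] φ.F) * φ.G)

/-- `P` belongs to a critical cycle of `φ`: it lies in the orbit of a critical periodic
point. -/
def InCriticalCycle (φ : P1Map K d) (P : P1 K) : Prop :=
  ∃ Q, IsCriticalPt φ Q ∧ IsPeriodicPoint φ Q ∧ ∃ n, φ.toFun^[n] Q = P

/-- The cardinality `|S|` of the set of places `S` consisting of all archimedean places
together with the finite places in `T`. -/
def sCard (K : Type*) [Field K] [NumberField K] (T : Finset (HeightOneSpectrum (𝓞 K))) : ℕ :=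
  T.card + Fintype.card (InfinitePlace K)

/-- `B(s) = 2^{16 s}`. -/
def Bconst (s : ℕ) : ℕ := 2 ^ (16 * s)

/-- `C(n,s) = e^{(6n)^{3n} (n s + 1 - n)}`. -/
def Cconst (n s : ℕ) : ℝ := Real.exp ((6 * n : ℝ) ^ (3 * n) * (n * s + 1 - n))

/-- `CV(d,s) = (3B(s)+13)d + 27B(s) + C(5,s) + 6C(3,s) + 32`. -/
def CVconst (d s : ℕ) : ℝ :=
  (3 * (Bconst s : ℝ) + 13) * d + 27 * (Bconst s : ℝ) + Cconst 5 s + 6 * Cconst 3 s + 32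

/-- `L₁(d,s) = (d-1)(1 + d(1 + B(s)))`. -/
def L1const (d s : ℕ) : ℕ := (d - 1) * (1 + d * (1 + Bconst s))

/-- `L₂(d,s) = max{(2(C(3,s)+2)+1)d + 1, (d-1)(1 + B(s)(B(s) + C(3,s) + 3))}`. -/
def L2const (d s : ℕ) : ℝ :=
  max ((2 * (Cconst 3 s + 2) + 1) * d + 1)
    (((d : ℝ) - 1) * (1 + (Bconst s : ℝ) * ((Bconst s : ℝ) + Cconst 3 s + 3)))

/-- `L₃(d,s) = ((1 + 3B(s))B(s) + 1)(d-1)`. -/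
def L3const (d s : ℕ) : ℕ := ((1 + 3 * Bconst s) * Bconst s + 1) * (d - 1)

/-- `L₄(d,s) = (C(3,s) + 3)(d-1)`. -/
def L4const (d s : ℕ) : ℝ := (Cconst 3 s + 3) * ((d : ℝ) - 1)

end

/-!
All points `P` of the set have, at every finite place `v` outside `T`, the same absolute values
`|a|_v` and `|1 - a|_v`, where `a` is the cross ratio of `P` with the three given points. So it
suffices to bound the number of solutions of the unit equation `a + (1 - a) = 1` whose absolute
values outside `S` are prescribed. The size of a solution is the total spread of the triples
`(log |a|_v, log |1 - a|_v, 0)`.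

* Small solutions: if the logarithms of `a` and `b` agree up to rounding at the places of `S` and
  their arguments agree up to `1 / 2` at the archimedean ones, then `a - b` is too small for the
  product formula unless `a = b`. At most `3234 ^ |S|` boxes occur.
* Large solutions: fix, at each place, which of `a`, `1 - a`, `1` is the smallest in absolute value,
  and the share of the place in the total spread up to rounding. The product formula for the
  determinant of `(a, 1 - a)` and `(b, 1 - b)` shows that the sizes of two distinct solutions of the
  same class differ at least by a factor `3 / 2`. Replacing `(a, 1 - a, -1)` by the triple
  `x i ^ (2 * M + 1) * q i` of sum zero, where `q` comes from Padé approximation to powers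
  (Beukers–Schlickewei), shows that they differ at most by a factor `21`. So each class has at most
  `8` solutions, and at most `225 ^ |S|` classes occur.
-/

namespace ThreePoint

section Residues

variable {F : Type*} [Field F]

/-- The residue at `0` of `P / (X g)ⁿ⁺¹`, as a linear function of `P`, for a power series `g`
with nonzero constant coefficient. -/
noncomputable def residue (g : PowerSeries F) (n : ℕ) : PowerSeries F →ₗ[F] F :=
  PowerSeries.coeff n ∘ₗ LinearMap.mulRight F (g⁻¹ ^ (n + 1))

lemma residue_apply (g : PowerSeries F) (n : ℕ) (P : PowerSeries F) :
    residue g n P = PowerSeries.coeff n (P * g⁻¹ ^ (n + 1)) :=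
  rfl

lemma residue_succ_mul {g : PowerSeries F} (hg : PowerSeries.constantCoeff g ≠ 0) (n : ℕ)
    (P : PowerSeries F) : residue g (n + 1) (P * (PowerSeries.X * g)) = residue g n P := by
  have cancel : P * (PowerSeries.X * g) * g⁻¹ ^ (n + 1 + 1)
      = PowerSeries.X * (P * g⁻¹ ^ (n + 1)) := by
    linear_combination PowerSeries.X * (P * g⁻¹ ^ (n + 1)) * PowerSeries.mul_inv_cancel g hg
  rw [residue_apply, cancel, PowerSeries.coeff_succ_X_mul, residue_apply]

lemma coeff_succ_X_mul_derivative_sub (n : ℕ) (H : PowerSeries F) :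
    PowerSeries.coeff (n + 1)
      (PowerSeries.X * PowerSeries.derivative F H - ((n : F) + 1) • H) = 0 := by
  rw [map_sub, PowerSeries.coeff_succ_X_mul, PowerSeries.coeff_derivative, map_smul, smul_eq_mul]
  ring

variable [CharZero F]

-- An exact differential has no residue; apply this to `P (X g)⁻⁽ⁿ⁺¹⁾`.
lemma residue_succ_mul_derivative {g : PowerSeries F} (hg : PowerSeries.constantCoeff g ≠ 0)
    (n : ℕ) (P : PowerSeries F) :
    residue g (n + 1) (P * PowerSeries.derivative F (PowerSeries.X * g))
      = ((n : F) + 1)⁻¹ * residue g n (PowerSeries.derivative F P) := by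
  have hn : (n + 1 : F) ≠ 0 := n.cast_add_one_ne_zero
  have quotient_rule : PowerSeries.X * PowerSeries.derivative F (P * g⁻¹ ^ (n + 1))
        - ((n : F) + 1) • (P * g⁻¹ ^ (n + 1))
      = (PowerSeries.derivative F P * (PowerSeries.X * g)
          - ((n : F) + 1) • (P * PowerSeries.derivative F (PowerSeries.X * g)))
        * g⁻¹ ^ (n + 1 + 1) := by
    simp only [Derivation.leibniz, PowerSeries.derivative_pow, PowerSeries.derivative_inv',
      smul_eq_mul, PowerSeries.derivative_X, Nat.add_sub_cancel, Algebra.smul_def, map_add,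
      map_natCast, map_one]
    push_cast
    linear_combination (- PowerSeries.X * PowerSeries.derivative F P * g⁻¹ ^ (n + 1)
      + (n + 1) * P * g⁻¹ ^ (n + 1)) * PowerSeries.mul_inv_cancel g hg
  have vanishing := coeff_succ_X_mul_derivative_sub n (P * g⁻¹ ^ (n + 1))
  rw [quotient_rule, ← residue_apply, map_sub, residue_succ_mul hg, map_smul, smul_eq_mul,
    sub_eq_zero] at vanishing
  rw [vanishing, inv_mul_cancel_left₀ hn]

variable {g t : PowerSeries F} {e f : F}

lemma residue_succ_of_bezout (hg : PowerSeries.constantCoeff g ≠ 0) (n : ℕ)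
    {L U V : PowerSeries F}
    (h : L = U * PowerSeries.derivative F (PowerSeries.X * g) + V * (PowerSeries.X * g)) :
    residue g (n + 1) L
      = ((n : F) + 1)⁻¹ * residue g n (PowerSeries.derivative F U) + residue g n V := by
  rw [h, map_add, residue_succ_mul_derivative hg, residue_succ_mul hg]

lemma residue_succ_of_cubic (hg : PowerSeries.constantCoeff g ≠ 0)
    (ht : PowerSeries.derivative F t = 1)
    (hQ : t ^ 3 - PowerSeries.C e * t ^ 2 + PowerSeries.C f * t = PowerSeries.X * g)
    (n : ℕ) {l₀ l₁ u₀ u₁ u₂ v₀ v₁ : F}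
    (h : PowerSeries.C l₀ + PowerSeries.C l₁ * t
      = (PowerSeries.C u₀ + PowerSeries.C u₁ * t + PowerSeries.C u₂ * t ^ 2)
          * (3 * t ^ 2 - 2 * PowerSeries.C e * t + PowerSeries.C f)
        + (PowerSeries.C v₀ + PowerSeries.C v₁ * t)
          * (t ^ 3 - PowerSeries.C e * t ^ 2 + PowerSeries.C f * t)) :
    l₀ * residue g (n + 1) 1 + l₁ * residue g (n + 1) t
      = (v₀ + u₁ * ((n : F) + 1)⁻¹) * residue g n 1
        + (v₁ + 2 * u₂ * ((n : F) + 1)⁻¹) * residue g n t := by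
  have hQ' : PowerSeries.derivative F (PowerSeries.X * g)
      = 3 * t ^ 2 - 2 * PowerSeries.C e * t + PowerSeries.C f := by
    simp [← hQ, ht]
    ring
  have hU : PowerSeries.derivative F
        (PowerSeries.C u₀ + PowerSeries.C u₁ * t + PowerSeries.C u₂ * t ^ 2)
      = u₁ • (1 : PowerSeries F) + (2 * u₂) • t := by
    simp only [PowerSeries.smul_eq_C_mul, map_mul, map_ofNat]
    simp [ht]
    ring
  have linear (a b : F) : PowerSeries.C a + PowerSeries.C b * t
      = a • (1 : PowerSeries F) + b • t := by
    simp [PowerSeries.smul_eq_C_mul]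
  rw [← hQ', hQ] at h
  have reduction := residue_succ_of_bezout hg n h
  rw [hU] at reduction
  simp only [linear, map_add, map_smul, smul_eq_mul] at reduction
  linear_combination reduction

-- The factor on the left is the discriminant of the cubic, a combination of it and its derivative;
-- the coefficients are those of the Bézout cofactors.
lemma residue_one_succ (hg : PowerSeries.constantCoeff g ≠ 0)
    (ht : PowerSeries.derivative F t = 1)
    (hQ : t ^ 3 - PowerSeries.C e * t ^ 2 + PowerSeries.C f * t = PowerSeries.X * g) (n : ℕ) :
    f ^ 2 * (e ^ 2 - 4 * f) * residue g (n + 1) 1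
      = (4 * e ^ 3 - 15 * e * f - e * (2 * e ^ 2 - 7 * f) * ((n : F) + 1)⁻¹) * residue g n 1
        + (e ^ 2 - 3 * f) * (4 * ((n : F) + 1)⁻¹ - 6) * residue g n t := by
  linear_combination residue_succ_of_cubic hg ht hQ n (l₀ := f ^ 2 * (e ^ 2 - 4 * f)) (l₁ := 0)
    (u₀ := f * (e ^ 2 - 4 * f)) (u₁ := -e * (2 * e ^ 2 - 7 * f)) (u₂ := 2 * (e ^ 2 - 3 * f))
    (v₀ := 4 * e ^ 3 - 15 * e * f) (v₁ := -6 * (e ^ 2 - 3 * f))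
    (by simp only [map_mul, map_sub, map_pow, map_neg, map_ofNat, map_zero]; ring)

lemma residue_linear_succ (hg : PowerSeries.constantCoeff g ≠ 0)
    (ht : PowerSeries.derivative F t = 1)
    (hQ : t ^ 3 - PowerSeries.C e * t ^ 2 + PowerSeries.C f * t = PowerSeries.X * g) (n : ℕ) :
    f ^ 2 * (e ^ 2 - 4 * f) * residue g (n + 1) t
      = (2 * e ^ 2 * f - 6 * f ^ 2 - f * (e ^ 2 - 2 * f) * ((n : F) + 1)⁻¹) * residue g n 1
        + e * f * (2 * ((n : F) + 1)⁻¹ - 3) * residue g n t := by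
  linear_combination residue_succ_of_cubic hg ht hQ n (l₀ := 0) (l₁ := f ^ 2 * (e ^ 2 - 4 * f))
    (u₀ := 0) (u₁ := -f * (e ^ 2 - 2 * f)) (u₂ := e * f) (v₀ := 2 * e ^ 2 * f - 6 * f ^ 2)
    (v₁ := -3 * e * f)
    (by simp only [map_mul, map_sub, map_pow, map_neg, map_ofNat, map_zero]; ring)

end Residues

section ResiduesOfCubic

variable {F : Type*} [Field F]

/-- The roots of the cubic with root differences `r (i + 1) - r (i + 2) = x i`
(for `x 0 + x 1 + x 2 = 0`), normalized by `r 2 = 0`. -/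
def cubicRoot (x : Fin 3 → F) : Fin 3 → F :=
  ![-x 1, x 0, 0]

/-- The Taylor expansion at `cubicRoot x i` of the product of the linear factors belonging to the
other two roots. -/
noncomputable def cofactor (x : Fin 3 → F) (i : Fin 3) : PowerSeries F :=
  (PowerSeries.X + PowerSeries.C (x (i + 2))) * (PowerSeries.X + PowerSeries.C (-x (i + 1)))

/-- The residue at `cubicRoot x i` of `1 / Qⁿ⁺¹`, where `Q` is the cubic with these roots. -/
noncomputable def residueOne (x : Fin 3 → F) (n : ℕ) (i : Fin 3) : F :=
  residue (cofactor x i) n 1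

/-- The residue at `cubicRoot x i` of `t / Qⁿ⁺¹`, where `t` is the variable of the cubic `Q`. -/
noncomputable def residueVar (x : Fin 3 → F) (n : ℕ) (i : Fin 3) : F :=
  residue (cofactor x i) n (PowerSeries.X + PowerSeries.C (cubicRoot x i))

variable {x : Fin 3 → F}

lemma constantCoeff_cofactor_ne_zero (hx : ∀ i, x i ≠ 0) (i : Fin 3) :
    PowerSeries.constantCoeff (cofactor x i) ≠ 0 := by
  simp [cofactor, hx]

lemma cubic_eq_X_mul_cofactor (hsum : x 0 + x 1 + x 2 = 0) (i : Fin 3) :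
    (PowerSeries.X + PowerSeries.C (cubicRoot x i)) ^ 3
        - PowerSeries.C (x 0 - x 1) * (PowerSeries.X + PowerSeries.C (cubicRoot x i)) ^ 2
        + PowerSeries.C (-(x 0 * x 1)) * (PowerSeries.X + PowerSeries.C (cubicRoot x i))
      = PowerSeries.X * cofactor x i := by
  have hx2 : x 2 = -x 0 - x 1 := by linear_combination hsum
  fin_cases i <;> simp [cubicRoot, cofactor, hx2] <;> ring

lemma residueOne_zero (x : Fin 3 → F) (i : Fin 3) :
    residueOne x 0 i = (x (i + 2) * -x (i + 1))⁻¹ := by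
  simp [residueOne, residue_apply, cofactor]

lemma residueVar_zero (x : Fin 3 → F) (i : Fin 3) :
    residueVar x 0 i = cubicRoot x i * (x (i + 2) * -x (i + 1))⁻¹ := by
  simp [residueVar, residue_apply, cofactor]

/-- The discriminant of the cubic with root differences `x 0`, `x 1` and `-x 0 - x 1`. -/
def cubicDiscr (x : Fin 3 → F) : F :=
  (x 0 * x 1) ^ 2 * ((x 0 - x 1) ^ 2 + 4 * (x 0 * x 1))

lemma cubicDiscr_ne_zero (hx : ∀ i, x i ≠ 0) (hsum : x 0 + x 1 + x 2 = 0) :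
    cubicDiscr x ≠ 0 := by
  have : cubicDiscr x = (x 0 * x 1 * x 2) ^ 2 := by
    rw [cubicDiscr, ← neg_eq_of_add_eq_zero_right hsum]
    ring
  rw [this]
  exact pow_ne_zero _ (mul_ne_zero (mul_ne_zero (hx 0) (hx 1)) (hx 2))

variable [CharZero F]

lemma residueOne_succ (hx : ∀ i, x i ≠ 0) (hsum : x 0 + x 1 + x 2 = 0) (n : ℕ) (i : Fin 3) :
    cubicDiscr x * residueOne x (n + 1) i
      = (4 * (x 0 - x 1) ^ 3 + 15 * (x 0 - x 1) * (x 0 * x 1)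
            - (x 0 - x 1) * (2 * (x 0 - x 1) ^ 2 + 7 * (x 0 * x 1)) * ((n : F) + 1)⁻¹)
          * residueOne x n i
        + ((x 0 - x 1) ^ 2 + 3 * (x 0 * x 1)) * (4 * ((n : F) + 1)⁻¹ - 6)
          * residueVar x n i := by
  have h := residue_one_succ (constantCoeff_cofactor_ne_zero hx i) (by simp)
    (cubic_eq_X_mul_cofactor hsum i) n
  rw [cubicDiscr]
  linear_combination (norm := (simp only [residueOne, residueVar]; ring)) h

lemma residueVar_succ (hx : ∀ i, x i ≠ 0) (hsum : x 0 + x 1 + x 2 = 0) (n : ℕ) (i : Fin 3) :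
    cubicDiscr x * residueVar x (n + 1) i
      = (-2 * (x 0 - x 1) ^ 2 * (x 0 * x 1) - 6 * (x 0 * x 1) ^ 2
            + (x 0 * x 1) * ((x 0 - x 1) ^ 2 + 2 * (x 0 * x 1)) * ((n : F) + 1)⁻¹)
          * residueOne x n i
        - (x 0 - x 1) * (x 0 * x 1) * (2 * ((n : F) + 1)⁻¹ - 3) * residueVar x n i := by
  have h := residue_linear_succ (constantCoeff_cofactor_ne_zero hx i) (by simp)
    (cubic_eq_X_mul_cofactor hsum i) n
  rw [cubicDiscr]
  linear_combination (norm := (simp only [residueOne, residueVar]; ring)) h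

lemma sum_residueOne_and_sum_residueVar_eq_zero (hx : ∀ i, x i ≠ 0)
    (hsum : x 0 + x 1 + x 2 = 0) (n : ℕ) :
    ∑ i, residueOne x n i = 0 ∧ ∑ i, residueVar x n i = 0 := by
  induction n with
  | zero =>
    have h0 := hx 0
    have h1 := hx 1
    have h2 := hx 2
    have hx2 : x 2 = -x 0 - x 1 := by linear_combination hsum
    simp only [Fin.sum_univ_three, residueOne_zero, residueVar_zero, cubicRoot, Fin.isValue,
      zero_add, Fin.reduceAdd, Matrix.cons_val]
    constructor <;> field_simp <;> rw [hx2] <;> ring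
  | succ n ih =>
    constructor <;> refine mul_left_cancel₀ (cubicDiscr_ne_zero hx hsum) ?_
    · simp only [Finset.mul_sum, residueOne_succ hx hsum, Finset.sum_add_distrib]
      simp only [← Finset.mul_sum, ih, mul_zero, add_zero]
    · simp only [Finset.mul_sum, residueVar_succ hx hsum, Finset.sum_sub_distrib]
      simp only [← Finset.mul_sum, ih, mul_zero, sub_zero]

lemma residueOne_mul_residueVar_sub_ne_zero (hx : ∀ i, x i ≠ 0) (hsum : x 0 + x 1 + x 2 = 0)
    (n : ℕ) :
    residueOne x n 0 * residueVar x n 1 - residueOne x n 1 * residueVar x n 0 ≠ 0 := by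
  induction n with
  | zero =>
    have h0 := hx 0
    have h1 := hx 1
    have h2 := hx 2
    have : residueOne x 0 0 * residueVar x 0 1 - residueOne x 0 1 * residueVar x 0 0
        = (-(x 0 * x 1 * x 2))⁻¹ := by
      simp only [residueOne_zero, residueVar_zero, cubicRoot, Fin.isValue, zero_add,
        Fin.reduceAdd, Matrix.cons_val]
      field_simp
      linear_combination hsum
    rw [this]
    exact inv_ne_zero (neg_ne_zero.mpr (mul_ne_zero (mul_ne_zero h0 h1) h2))
  | succ n ih =>
    set k : F := ((n : F) + 1)⁻¹ with hk
    have hn : (n + 1 : F) ≠ 0 := n.cast_add_one_ne_zero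
    have recurrence : cubicDiscr x * (residueOne x (n + 1) 0 * residueVar x (n + 1) 1
          - residueOne x (n + 1) 1 * residueVar x (n + 1) 0)
        = 3 * (2 * k - 3) * (3 - k)
          * (residueOne x n 0 * residueVar x n 1 - residueOne x n 1 * residueVar x n 0) := by
      refine mul_left_cancel₀ (cubicDiscr_ne_zero hx hsum) ?_
      have expand (a b c d : F) : cubicDiscr x * (cubicDiscr x * (a * b - c * d))
          = cubicDiscr x * a * (cubicDiscr x * b) - cubicDiscr x * c * (cubicDiscr x * d) := by
        ring
      simp only [expand, residueOne_succ hx hsum, residueVar_succ hx hsum, ← hk]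
      rw [cubicDiscr]
      ring
    have factor_ne_zero : 3 * (2 * k - 3) * (3 - k) ≠ 0 := by
      have : 3 * (2 * k - 3) * (3 - k) = -(3 * (3 * n + 1) * (3 * n + 2) : ℕ) * k ^ 2 := by
        rw [hk]
        push_cast
        field_simp
        ring
      rw [this]
      exact mul_ne_zero (neg_ne_zero.mpr (Nat.cast_ne_zero.mpr (by positivity)))
        (pow_ne_zero _ (inv_ne_zero hn))
    exact right_ne_zero_of_mul (recurrence.trans_ne (mul_ne_zero factor_ne_zero ih))

end ResiduesOfCubic

section PadeSums

variable {F : Type*} [Field F]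

/-- Up to a power of `αβ`, the coefficient of `Xᴸ` in `((X + α) (X + β))⁻⁽ᴹ⁺¹⁾`; the subtractions
do not truncate as long as `L ≤ M`. -/
def padeSum (M L : ℕ) (α β : F) : F :=
  ∑ p ∈ Finset.HasAntidiagonal.antidiagonal L,
    (-1) ^ L * ((M + p.1).choose M : F) * ((M + p.2).choose M : F) *
      (α ^ (M - p.1) * β ^ (M - p.2))

lemma coeff_X_add_C_inv_pow {α : F} (hα : α ≠ 0) (M j : ℕ) :
    PowerSeries.coeff j ((PowerSeries.X + PowerSeries.C α)⁻¹ ^ (M + 1)) =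
      (-1) ^ j * ((M + j).choose M : F) * (α⁻¹) ^ (M + 1 + j) := by
  have geometric : (PowerSeries.X + PowerSeries.C α)⁻¹
      = PowerSeries.C α⁻¹ * PowerSeries.rescale (-α⁻¹) (PowerSeries.mk 1) := by
    rw [PowerSeries.inv_eq_iff_mul_eq_one (by simpa using hα)]
    have hgeom := congrArg (PowerSeries.rescale (-α⁻¹)) (PowerSeries.mk_one_mul_one_sub_eq_one F)
    have hC : (PowerSeries.C α⁻¹ : PowerSeries F) * PowerSeries.C α = 1 := by
      rw [← map_mul, inv_mul_cancel₀ hα, map_one]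
    rw [map_mul, map_sub, map_one, PowerSeries.rescale_X, map_neg] at hgeom
    linear_combination hgeom + (PowerSeries.rescale (-α⁻¹) (PowerSeries.mk 1)) * hC
  rw [geometric, mul_pow, ← map_pow, ← map_pow, PowerSeries.mk_one_pow_eq_mk_choose_add,
    PowerSeries.coeff_C_mul, PowerSeries.coeff_rescale, PowerSeries.coeff_mk, neg_pow]
  ring

lemma pow_mul_coeff_eq_padeSum {M L : ℕ} (hL : L ≤ M) {α β : F} (hα : α ≠ 0) (hβ : β ≠ 0) :
    (α * β) ^ (2 * M + 1) * PowerSeries.coeff L (((PowerSeries.X + PowerSeries.C α) *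
      (PowerSeries.X + PowerSeries.C β))⁻¹ ^ (M + 1)) = padeSum M L α β := by
  rw [PowerSeries.mul_inv_rev, mul_pow _ _ (M + 1), mul_comm (_ ^ (M + 1)),
    PowerSeries.coeff_mul, Finset.mul_sum, padeSum]
  refine Finset.sum_congr rfl fun p hp ↦ ?_
  rw [Finset.HasAntidiagonal.mem_antidiagonal] at hp
  have split (γ : F) {j : ℕ} (hj : j ≤ L) :
      γ ^ (2 * M + 1) = γ ^ (M - j) * γ ^ (M + 1 + j) := by
    rw [← pow_add]
    congr 1
    lia
  rw [coeff_X_add_C_inv_pow hα, coeff_X_add_C_inv_pow hβ, mul_pow, split α (j := p.1) (by lia),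
    split β (j := p.2) (by lia), ← hp, pow_add (-1 : F) p.1 p.2, inv_pow, inv_pow]
  field_simp

/-- The first of two independent solutions `c` of `∑ i, x i ^ (2M+1) * c i = 0`, for
`x 0 + x 1 + x 2 = 0`. -/
def padeFst (M : ℕ) (x : Fin 3 → F) (i : Fin 3) : F :=
  padeSum M M (x (i + 2)) (-x (i + 1))

/-- The second of two independent solutions `c` of `∑ i, x i ^ (2M+1) * c i = 0`, for
`x 0 + x 1 + x 2 = 0` and `1 ≤ M`. -/
def padeSnd (M : ℕ) (x : Fin 3 → F) (i : Fin 3) : F :=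
  padeSum M (M - 1) (x (i + 2)) (-x (i + 1)) + cubicRoot x i * padeFst M x i

variable {x : Fin 3 → F}

lemma prod_pow_eq (x : Fin 3 → F) (i : Fin 3) (n : ℕ) :
    (-∏ j, x j) ^ n = x i ^ n * (x (i + 2) * -x (i + 1)) ^ n := by
  rw [← mul_pow, Fin.prod_univ_three]
  congr 1
  fin_cases i <;> simp <;> ring

lemma pow_mul_padeFst (hx : ∀ i, x i ≠ 0) (M : ℕ) (i : Fin 3) :
    x i ^ (2 * M + 1) * padeFst M x i = (-∏ j, x j) ^ (2 * M + 1) * residueOne x M i := by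
  rw [padeFst, ← pow_mul_coeff_eq_padeSum le_rfl (hx _) (neg_ne_zero.mpr (hx _)), prod_pow_eq x i,
    residueOne, residue_apply, cofactor, one_mul, mul_assoc]

lemma pow_mul_padeSnd (hx : ∀ i, x i ≠ 0) {M : ℕ} (hM : 1 ≤ M) (i : Fin 3) :
    x i ^ (2 * M + 1) * padeSnd M x i = (-∏ j, x j) ^ (2 * M + 1) * residueVar x M i := by
  have split : residueVar x M i = PowerSeries.coeff (M - 1) ((cofactor x i)⁻¹ ^ (M + 1))
      + cubicRoot x i * residueOne x M i := by
    obtain ⟨m, rfl⟩ := Nat.exists_eq_add_of_le' hM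
    rw [residueVar, map_add, residueOne, ← smul_eq_mul, ← map_smul, PowerSeries.smul_eq_C_mul,
      mul_one, residue_apply, PowerSeries.coeff_succ_X_mul, Nat.add_sub_cancel]
  rw [padeSnd, mul_add, mul_left_comm, pow_mul_padeFst hx,
    ← pow_mul_coeff_eq_padeSum (M.sub_le 1) (hx _) (neg_ne_zero.mpr (hx _)), ← cofactor, split,
    prod_pow_eq x i]
  ring

variable [CharZero F]

lemma sum_pow_mul_padeFst (hx : ∀ i, x i ≠ 0) (hsum : x 0 + x 1 + x 2 = 0) (M : ℕ) :
    ∑ i, x i ^ (2 * M + 1) * padeFst M x i = 0 := by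
  simp only [pow_mul_padeFst hx, ← Finset.mul_sum,
    (sum_residueOne_and_sum_residueVar_eq_zero hx hsum M).1, mul_zero]

lemma sum_pow_mul_padeSnd (hx : ∀ i, x i ≠ 0) (hsum : x 0 + x 1 + x 2 = 0) {M : ℕ}
    (hM : 1 ≤ M) : ∑ i, x i ^ (2 * M + 1) * padeSnd M x i = 0 := by
  simp only [pow_mul_padeSnd hx hM, ← Finset.mul_sum,
    (sum_residueOne_and_sum_residueVar_eq_zero hx hsum M).2, mul_zero]

lemma padeFst_mul_padeSnd_sub_ne_zero (hx : ∀ i, x i ≠ 0) (hsum : x 0 + x 1 + x 2 = 0) {M : ℕ}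
    (hM : 1 ≤ M) :
    padeFst M x 0 * padeSnd M x 1 - padeFst M x 1 * padeSnd M x 0 ≠ 0 := by
  have scaled : x 0 ^ (2 * M + 1) * x 1 ^ (2 * M + 1)
        * (padeFst M x 0 * padeSnd M x 1 - padeFst M x 1 * padeSnd M x 0)
      = ((-∏ j, x j) ^ (2 * M + 1)) ^ 2
        * (residueOne x M 0 * residueVar x M 1 - residueOne x M 1 * residueVar x M 0) := by
    linear_combination x 1 ^ (2 * M + 1) * padeSnd M x 1 * pow_mul_padeFst hx M 0
      + (-∏ j, x j) ^ (2 * M + 1) * residueOne x M 0 * pow_mul_padeSnd hx hM 1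
      - x 0 ^ (2 * M + 1) * padeSnd M x 0 * pow_mul_padeFst hx M 1
      - (-∏ j, x j) ^ (2 * M + 1) * residueOne x M 1 * pow_mul_padeSnd hx hM 0
  have prod_ne_zero : (-∏ j, x j) ^ (2 * M + 1) ≠ 0 :=
    pow_ne_zero _ (neg_ne_zero.mpr (Finset.prod_ne_zero_iff.mpr fun i _ ↦ hx i))
  exact right_ne_zero_of_mul (scaled.trans_ne (mul_ne_zero (pow_ne_zero _ prod_ne_zero)
    (residueOne_mul_residueVar_sub_ne_zero hx hsum M)))

end PadeSums

section Counting

variable {ι α β κ : Type*}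

-- Rankin's trick: weigh the label `f` by `ρ ^ ∑ v, g (f v)`; the total weight factors over `v`.
lemma card_mul_pow_le_of_labels [Fintype ι] [DecidableEq α] {F : Finset β}
    {label : β → ι → α} {g : α → ℕ} {L k : ℕ} (hL : ∀ b ∈ F, ∑ v, g (label b v) ≤ L)
    (hk : ∀ b₀ ∈ F, (F.filter fun b ↦ label b = label b₀).card ≤ k)
    {ρ c : ℝ} (hρ : 0 ≤ ρ) (hρ1 : ρ ≤ 1) (hc : ∀ A : Finset α, ∑ a ∈ A, ρ ^ g a ≤ c) :
    F.card * ρ ^ L ≤ k * c ^ Fintype.card ι := by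
  set A : Finset α := F.biUnion fun b ↦ Finset.univ.image (label b)
  have card_le : F.card ≤ k * (F.image label).card :=
    Finset.card_le_mul_card_image F k (Finset.forall_mem_image.mpr hk)
  have image_subset : F.image label ⊆ Fintype.piFinset fun _ ↦ A :=
    Finset.image_subset_iff.mpr fun b hb ↦ Fintype.mem_piFinset.mpr fun v ↦
      Finset.mem_biUnion.mpr ⟨b, hb, Finset.mem_image_of_mem _ (Finset.mem_univ v)⟩
  calc (F.card : ℝ) * ρ ^ L
      ≤ (k * (F.image label).card : ℕ) * ρ ^ L := by gcongr
    _ = k * ∑ _ ∈ F.image label, ρ ^ L := by simp [mul_assoc]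
    _ ≤ k * ∑ f ∈ F.image label, ρ ^ ∑ v, g (f v) := by
        gcongr _ * ?_
        exact Finset.sum_le_sum <| Finset.forall_mem_image.mpr fun b hb ↦
          pow_le_pow_of_le_one hρ hρ1 (hL b hb)
    _ ≤ k * ∑ f ∈ Fintype.piFinset fun _ : ι ↦ A, ρ ^ ∑ v, g (f v) := by gcongr
    _ = k * (∑ a ∈ A, ρ ^ g a) ^ Fintype.card ι := by
        have factor := Finset.prod_univ_sum (fun _ : ι ↦ A) fun _ a ↦ ρ ^ g a
        rw [Finset.prod_const, Finset.card_univ] at factor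
        simp only [factor, Finset.prod_pow_eq_pow_sum]
    _ ≤ k * c ^ Fintype.card ι := by
        gcongr
        exact hc A

lemma card_le_of_labels [Fintype ι] [DecidableEq α] {F : Finset β} {label : β → ι → α}
    {g : α → ℕ} {N k : ℕ}
    (hN : 0 < N) (hL : ∀ b ∈ F, ∑ v, g (label b v) ≤ N * Fintype.card ι)
    (hk : ∀ b₀ ∈ F, (F.filter fun b ↦ label b = label b₀).card ≤ k)
    {c : ℝ} (hc : ∀ A : Finset α, ∑ a ∈ A, (N / (N + 1) : ℝ) ^ g a ≤ c) :
    (F.card : ℝ) ≤ k * (3 * c) ^ Fintype.card ι := by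
  set ρ : ℝ := N / (N + 1)
  set s := Fintype.card ι
  have hN' : (0 : ℝ) < N := Nat.cast_pos.mpr hN
  have hρ : 0 < ρ := by positivity
  have hρ1 : ρ ≤ 1 := (div_le_one (by positivity)).mpr (by linarith)
  have hρN : 1 ≤ 3 * ρ ^ N := by
    have : (1 + (N : ℝ)⁻¹) ^ N ≤ 3 := calc
      (1 + (N : ℝ)⁻¹) ^ N ≤ Real.exp (N : ℝ)⁻¹ ^ N := by
        gcongr
        linarith [Real.add_one_le_exp (N : ℝ)⁻¹]
      _ = Real.exp 1 := by rw [← Real.exp_nat_mul, mul_inv_cancel₀ hN'.ne']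
      _ ≤ 3 := by linarith [Real.exp_one_lt_d9]
    have hinv : (1 + (N : ℝ)⁻¹) * ρ = 1 := by
      simp only [ρ]
      field_simp
    calc 1 = (1 + (N : ℝ)⁻¹) ^ N * ρ ^ N := by rw [← mul_pow, hinv, one_pow]
      _ ≤ 3 * ρ ^ N := by gcongr
  calc (F.card : ℝ) ≤ F.card * (3 * ρ ^ N) ^ s :=
        le_mul_of_one_le_right (Nat.cast_nonneg _) (one_le_pow₀ hρN)
    _ = F.card * ρ ^ (N * s) * 3 ^ s := by rw [mul_pow, pow_mul]; ring
    _ ≤ k * c ^ s * 3 ^ s := by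
        gcongr ?_ * _
        exact card_mul_pow_le_of_labels hL hk hρ.le hρ1 hc
    _ = k * (3 * c) ^ s := by rw [mul_pow]; ring

lemma sum_pow_snd_le [Fintype κ] {g : α → ℕ} {ρ c : ℝ} (hρ : 0 ≤ ρ)
    (hc : ∀ A : Finset α, ∑ a ∈ A, ρ ^ g a ≤ c) (A : Finset (κ × α)) :
    ∑ a ∈ A, ρ ^ g a.2 ≤ Fintype.card κ * c := by
  have hA : A ⊆ Finset.univ ×ˢ A.image Prod.snd := fun a ha ↦
    Finset.mem_product.mpr ⟨Finset.mem_univ _, Finset.mem_image_of_mem _ ha⟩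
  calc ∑ a ∈ A, ρ ^ g a.2
      ≤ ∑ a ∈ Finset.univ ×ˢ A.image Prod.snd, ρ ^ g a.2 :=
        Finset.sum_le_sum_of_subset_of_nonneg hA fun _ _ _ ↦ by positivity
    _ = Fintype.card κ * ∑ a ∈ A.image Prod.snd, ρ ^ g a := by
        simp [Finset.sum_product]
    _ ≤ Fintype.card κ * c := by
        gcongr
        exact hc _

lemma sum_pow_le_inv_one_sub {ρ : ℝ} (hρ : 0 ≤ ρ) (hρ1 : ρ < 1) (A : Finset ℕ) :
    ∑ n ∈ A, ρ ^ n ≤ (1 - ρ)⁻¹ :=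
  sum_le_hasSum A (fun _ _ ↦ by positivity) (hasSum_geometric_of_lt_one hρ hρ1)

lemma sum_pow_natAbs_le {ρ : ℝ} (hρ : 0 ≤ ρ) (hρ1 : ρ < 1) (A : Finset ℤ) :
    ∑ n ∈ A, ρ ^ n.natAbs ≤ (1 + ρ) / (1 - ρ) := by
  have hgeom := hasSum_geometric_of_lt_one hρ hρ1
  have hsum : HasSum (fun n : ℤ ↦ ρ ^ n.natAbs) ((1 - ρ)⁻¹ + ρ * (1 - ρ)⁻¹) := by
    refine HasSum.of_nat_of_neg_add_one (by simpa using hgeom) ?_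
    have natAbs_neg_succ (n : ℕ) : (-((n : ℤ) + 1)).natAbs = n + 1 := by lia
    simpa only [natAbs_neg_succ, pow_succ'] using hgeom.mul_left ρ
  exact (sum_le_hasSum A (fun _ _ ↦ by positivity) hsum).trans_eq (by ring)

lemma card_le_of_geometric_growth {F : Finset β} {W : β → ℝ} {q : ℝ} {n : ℕ} (hq : 1 < q)
    (hpos : ∀ b ∈ F, 0 < W b)
    (hgap : ∀ a ∈ F, ∀ b ∈ F, a ≠ b → W a ≤ W b → q * W a ≤ W b)
    (hbdd : ∀ a ∈ F, ∀ b ∈ F, W b < q ^ n * W a) : F.card ≤ n := by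
  obtain rfl | hF := F.eq_empty_or_nonempty
  · simp
  obtain ⟨a₀, ha₀, hmin⟩ := F.exists_min_image W hF
  have hq0 : 0 < q := one_pos.trans hq
  have h₀ := hpos a₀ ha₀
  set level : β → ℕ := fun b ↦ ⌊Real.logb q (W b / W a₀)⌋₊
  have hlog (b) (hb : b ∈ F) : 0 ≤ Real.logb q (W b / W a₀) :=
    Real.logb_nonneg hq ((one_le_div h₀).mpr (hmin b hb))
  have level_lt : ∀ a ∈ F, ∀ b ∈ F, a ≠ b → W a ≤ W b → level a < level b := by
    intro a ha b hb hab hle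
    refine Nat.lt_of_succ_le ?_
    simp only [level, Nat.succ_eq_add_one]
    rw [← Nat.floor_add_one (hlog a ha)]
    refine Nat.floor_mono ?_
    rw [Real.le_logb_iff_rpow_le hq (div_pos (hpos b hb) h₀), Real.rpow_add hq0, Real.rpow_one,
      Real.rpow_logb hq0 hq.ne' (div_pos (hpos a ha) h₀), div_mul_eq_mul_div, mul_comm]
    gcongr
    exact hgap a ha b hb hab hle
  have maps_to : Set.MapsTo level F (Finset.range n) := by
    intro b hb
    rw [Finset.mem_coe, Finset.mem_range, Nat.floor_lt (hlog b hb),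
      Real.logb_lt_iff_lt_rpow hq (div_pos (hpos b hb) h₀), Real.rpow_natCast, div_lt_iff₀ h₀]
    exact hbdd a₀ ha₀ b hb
  have inj_on : Set.InjOn level F := by
    intro a ha b hb heq
    by_contra hab
    rcases le_total (W a) (W b) with hle | hle
    · exact (level_lt a ha b hb hab hle).ne heq
    · exact (level_lt b hb a ha (Ne.symm hab) hle).ne' heq
  simpa using Finset.card_le_card_of_injOn level maps_to inj_on

end Counting

section ComplexSectors

lemma norm_sub_le_of_abs_arg_sub_le {z w : ℂ} (h : |z.arg - w.arg| ≤ 1 / 2) (hw : w ≠ 0)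
    (hzw : ‖w‖ ≤ ‖z‖) : ‖z - w‖ ≤ ‖z‖ ^ 2 / (2 * ‖w‖) := by
  have chord : ‖Complex.exp (Complex.I * (z.arg - w.arg : ℝ)) - 1‖ ≤ 1 / 2 :=
    Real.norm_exp_I_mul_ofReal_sub_one_le.trans h
  have polar : z - w = ((‖z‖ - ‖w‖ : ℝ) : ℂ) * Complex.exp (z.arg * Complex.I)
      + ‖w‖ * Complex.exp (w.arg * Complex.I)
        * (Complex.exp (Complex.I * (z.arg - w.arg : ℝ)) - 1) := by
    have rotate : Complex.exp (w.arg * Complex.I)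
        * Complex.exp (Complex.I * (z.arg - w.arg : ℝ)) = Complex.exp (z.arg * Complex.I) := by
      rw [← Complex.exp_add]
      push_cast
      ring_nf
    push_cast at rotate
    nth_rewrite 1 [← Complex.norm_mul_exp_arg_mul_I z, ← Complex.norm_mul_exp_arg_mul_I w]
    push_cast
    linear_combination -(‖w‖ : ℂ) * rotate
  have triangle : ‖z - w‖ ≤ (‖z‖ - ‖w‖) + ‖w‖ * (1 / 2) := calc
    ‖z - w‖ ≤ |‖z‖ - ‖w‖| + ‖w‖ * ‖Complex.exp (Complex.I * (z.arg - w.arg : ℝ)) - 1‖ := by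
      rw [polar]
      refine (norm_add_le _ _).trans_eq ?_
      simp only [norm_mul, Complex.norm_exp_ofReal_mul_I, Complex.norm_real, mul_one,
        Real.norm_eq_abs, abs_norm]
    _ ≤ (‖z‖ - ‖w‖) + ‖w‖ * (1 / 2) := by
      rw [abs_of_nonneg (sub_nonneg.mpr hzw)]
      gcongr
  have hw' : 0 < ‖w‖ := norm_pos_iff.mpr hw
  rw [le_div_iff₀ (by positivity)]
  nlinarith [sq_nonneg (‖z‖ - ‖w‖)]

lemma floor_two_mul_arg_mem_Icc (z : ℂ) : ⌊2 * z.arg⌋ ∈ Finset.Icc (-7 : ℤ) 6 := by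
  have := Complex.neg_pi_lt_arg z
  have := Complex.arg_le_pi z
  have := Real.pi_lt_d2
  rw [Finset.mem_Icc, Int.le_floor, ← Int.lt_add_one_iff, Int.floor_lt]
  constructor <;> push_cast <;> linarith

lemma abs_arg_sub_le_of_floor_eq {z w : ℂ} (h : ⌊2 * z.arg⌋ = ⌊2 * w.arg⌋) :
    |z.arg - w.arg| ≤ 1 / 2 := by
  have := Int.abs_sub_lt_one_of_floor_eq_floor h
  rw [← mul_sub, abs_mul, abs_two] at this
  linarith

end ComplexSectors

/-- A normalized place of a field: a power of an archimedean absolute value, the exponent being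
the local degree, or a nonarchimedean absolute value. -/
inductive NormalizedPlace (K : Type*) [Field K] where
  | archimedean (φ : K →+* ℂ) (n : ℕ) (hn : n ≠ 0)
  | nonarchimedean (A : AbsoluteValue K ℝ) (hA : IsNonarchimedean A)

namespace NormalizedPlace

variable {K : Type*} [Field K]

/-- The normalized absolute value of a place; it satisfies the triangle inequality only up to the
factor `2 ^ v.degree`. -/
noncomputable def norm : NormalizedPlace K → K →*₀ ℝ
  | archimedean φ _ hn => (powMonoidWithZeroHom hn).comp (normHom.comp φ.toMonoidWithZeroHom)
  | nonarchimedean A _ => A.toMonoidWithZeroHom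

/-- The local degree of an archimedean place, and `0` for a nonarchimedean one. -/
def degree : NormalizedPlace K → ℕ
  | archimedean _ n _ => n
  | nonarchimedean _ _ => 0

/-- The angular sector of opening `1 / 2` that contains the image of `a` at an archimedean place;
a constant at the nonarchimedean places. -/
noncomputable def sector : NormalizedPlace K → K → Finset.Icc (-7 : ℤ) 6
  | archimedean φ _ _, a => ⟨⌊2 * (φ a).arg⌋, floor_two_mul_arg_mem_Icc _⟩
  | nonarchimedean _ _, _ => ⟨0, by simp⟩

lemma sector_eq_of_degree_eq_zero {v : NormalizedPlace K} (hv : v.degree = 0) (a b : K) :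
    v.sector a = v.sector b := by
  cases v with
  | archimedean φ n hn => exact absurd hv hn
  | nonarchimedean A hA => rfl

lemma norm_archimedean_apply (φ : K →+* ℂ) (n : ℕ) (hn : n ≠ 0) (a : K) :
    (archimedean φ n hn).norm a = ‖φ a‖ ^ n :=
  rfl

lemma norm_nonarchimedean_apply (A : AbsoluteValue K ℝ) (hA : IsNonarchimedean A) (a : K) :
    (nonarchimedean A hA).norm a = A a :=
  rfl

variable (v : NormalizedPlace K)

lemma norm_nonneg (a : K) : 0 ≤ v.norm a := by
  cases v with
  | archimedean φ n => exact pow_nonneg (_root_.norm_nonneg (φ a)) n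
  | nonarchimedean A => exact A.nonneg a

lemma norm_pos {a : K} (ha : a ≠ 0) : 0 < v.norm a :=
  (v.norm_nonneg a).lt_of_ne' ((map_ne_zero v.norm).mpr ha)

lemma norm_neg (a : K) : v.norm (-a) = v.norm a := by
  cases v <;> simp [norm_archimedean_apply, norm_nonarchimedean_apply]

lemma norm_sum_le {β : Type*} {s : Finset β} {f : β → K} {m : ℝ} (hm₀ : 0 ≤ m)
    (hm : ∀ i ∈ s, v.norm (f i) ≤ m) : v.norm (∑ i ∈ s, f i) ≤ s.card ^ v.degree * m := by
  obtain rfl | hs := s.eq_empty_or_nonempty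
  · simpa using by positivity
  cases v with
  | archimedean φ n hn =>
    obtain ⟨i₀, hi₀, hmax⟩ := s.exists_max_image (fun i ↦ ‖φ (f i)‖) hs
    calc ‖φ (∑ i ∈ s, f i)‖ ^ n ≤ (s.card * ‖φ (f i₀)‖) ^ n := by
          rw [map_sum, ← nsmul_eq_mul]
          gcongr
          exact (norm_sum_le _ _).trans (Finset.sum_le_card_nsmul _ _ _ hmax)
      _ ≤ s.card ^ n * m := by
          rw [mul_pow]
          gcongr
          exact hm i₀ hi₀
  | nonarchimedean A hA =>
    simp only [degree, pow_zero, one_mul]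
    exact (hA.apply_sum_le_sup hs).trans (Finset.sup'_le hs _ hm)

lemma norm_add_le {a b : K} {m : ℝ} (ha : v.norm a ≤ m) (hb : v.norm b ≤ m) :
    v.norm (a + b) ≤ 2 ^ v.degree * m := by
  simpa using v.norm_sum_le (s := Finset.univ) (f := ![a, b]) ((v.norm_nonneg a).trans ha)
    (by simp [Fin.forall_fin_two, ha, hb])

lemma norm_natCast_le (N : ℕ) : v.norm N ≤ N ^ v.degree := by
  simpa using v.norm_sum_le (s := Finset.range N) (f := fun _ ↦ 1) zero_le_one (by simp)

lemma norm_choose_le (N k : ℕ) : v.norm (N.choose k : K) ≤ (2 ^ v.degree) ^ N := by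
  refine (v.norm_natCast_le _).trans ?_
  rw [← pow_mul, mul_comm, pow_mul]
  gcongr
  exact_mod_cast Nat.choose_le_two_pow N k

lemma norm_padeSum_le {M L : ℕ} (hL : L ≤ M) {α β : K} {H : ℝ} (hα : v.norm α ≤ H)
    (hβ : v.norm β ≤ H) :
    v.norm (padeSum M L α β) ≤ (2 ^ v.degree) ^ (4 * M) * H ^ (2 * M - L) := by
  have hH : 0 ≤ H := (v.norm_nonneg α).trans hα
  have h2 : (1 : ℝ) ≤ 2 ^ v.degree := one_le_pow₀ one_le_two
  have hα₀ := v.norm_nonneg α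
  have hβ₀ := v.norm_nonneg β
  have term_le : ∀ p ∈ Finset.HasAntidiagonal.antidiagonal L,
      v.norm ((-1) ^ L * ((M + p.1).choose M : K) * ((M + p.2).choose M : K)
        * (α ^ (M - p.1) * β ^ (M - p.2))) ≤ (2 ^ v.degree) ^ (2 * M + L) * H ^ (2 * M - L) := by
    intro p hp
    rw [Finset.HasAntidiagonal.mem_antidiagonal] at hp
    calc _ = v.norm ((M + p.1).choose M) * v.norm ((M + p.2).choose M)
          * (v.norm α ^ (M - p.1) * v.norm β ^ (M - p.2)) := by
          simp only [map_mul, map_pow, v.norm_neg, map_one, one_pow, one_mul]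
      _ ≤ (2 ^ v.degree) ^ (M + p.1) * (2 ^ v.degree) ^ (M + p.2)
          * (H ^ (M - p.1) * H ^ (M - p.2)) := by
          gcongr
          · exact v.norm_nonneg _
          · exact v.norm_choose_le _ _
          · exact v.norm_choose_le _ _
      _ = (2 ^ v.degree) ^ (2 * M + L) * H ^ (2 * M - L) := by
          rw [← pow_add, ← pow_add]
          congr 2 <;> lia
  calc v.norm (padeSum M L α β)
      ≤ (L + 1 : ℕ) ^ v.degree * ((2 ^ v.degree) ^ (2 * M + L) * H ^ (2 * M - L)) := by
        simpa only [padeSum, Finset.Nat.card_antidiagonal]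
          using v.norm_sum_le (by positivity) term_le
    _ ≤ (2 ^ v.degree) ^ L * ((2 ^ v.degree) ^ (2 * M + L) * H ^ (2 * M - L)) := by
        gcongr ?_ * _
        rw [← pow_mul, mul_comm, pow_mul]
        gcongr
        exact_mod_cast Nat.lt_two_pow_self
    _ = (2 ^ v.degree) ^ (L + (2 * M + L)) * H ^ (2 * M - L) := by rw [pow_add]; ring
    _ ≤ (2 ^ v.degree) ^ (4 * M) * H ^ (2 * M - L) := by
        gcongr
        lia

variable {v}

lemma norm_padeFst_le (M : ℕ) {x : Fin 3 → K} {H : ℝ} (hx : ∀ i, v.norm (x i) ≤ H)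
    (i : Fin 3) : v.norm (padeFst M x i) ≤ (2 ^ v.degree) ^ (4 * M) * H ^ M := by
  refine (v.norm_padeSum_le le_rfl (hx _) (by simpa only [v.norm_neg] using hx _)).trans_eq ?_
  congr 2
  lia

lemma norm_cubicRoot_le {x : Fin 3 → K} {H : ℝ} (hx : ∀ i, v.norm (x i) ≤ H) (i : Fin 3) :
    v.norm (cubicRoot x i) ≤ H := by
  fin_cases i
  · simpa [cubicRoot, v.norm_neg] using hx 1
  · simpa [cubicRoot] using hx 0
  · simpa [cubicRoot] using (v.norm_nonneg _).trans (hx 0)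

lemma norm_padeSnd_le {M : ℕ} (hM : 1 ≤ M) {x : Fin 3 → K} {H : ℝ}
    (hx : ∀ i, v.norm (x i) ≤ H) (i : Fin 3) :
    v.norm (padeSnd M x i) ≤ (2 ^ v.degree) ^ (4 * M + 1) * H ^ (M + 1) := by
  have hH : 0 ≤ H := (v.norm_nonneg _).trans (hx 0)
  have sum_le : v.norm (padeSum M (M - 1) (x (i + 2)) (-x (i + 1)))
      ≤ (2 ^ v.degree) ^ (4 * M) * H ^ (M + 1) := by
    have neg_le : v.norm (-x (i + 1)) ≤ H := (v.norm_neg _).trans_le (hx _)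
    refine (v.norm_padeSum_le (M.sub_le 1) (hx _) neg_le).trans_eq ?_
    congr 2
    lia
  have root_le : v.norm (cubicRoot x i * padeFst M x i)
      ≤ (2 ^ v.degree) ^ (4 * M) * H ^ (M + 1) := calc
    _ ≤ H * ((2 ^ v.degree) ^ (4 * M) * H ^ M) := by
      rw [map_mul]
      gcongr
      · exact v.norm_nonneg _
      · exact norm_cubicRoot_le hx i
      · exact norm_padeFst_le M hx i
    _ = (2 ^ v.degree) ^ (4 * M) * H ^ (M + 1) := by ring
  exact (v.norm_add_le sum_le root_le).trans_eq (by ring)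

-- As both vectors sum to zero, their three `2 × 2` minors agree up to sign.
lemma norm_mul_sub_mul_le {x y : Fin 3 → K} (hx : ∑ i, x i = 0) (hy : ∑ i, y i = 0) {m : ℝ}
    (i : Fin 3) (hxi : ∀ j, v.norm (x i * y j) ≤ m) (hyi : ∀ j, v.norm (x j * y i) ≤ m) :
    v.norm (x 0 * y 1 - x 1 * y 0) ≤ 2 ^ v.degree * m := by
  have minor_le (j : Fin 3) : v.norm (x i * y j - x j * y i) ≤ 2 ^ v.degree * m := by
    rw [sub_eq_add_neg]
    exact v.norm_add_le (hxi j) ((v.norm_neg _).trans_le (hyi j))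
  rw [Fin.sum_univ_three] at hx hy
  obtain rfl | rfl | rfl : i = 0 ∨ i = 1 ∨ i = 2 := by lia
  · exact minor_le 1
  · rw [← v.norm_neg, neg_sub]
    exact minor_le 0
  · convert minor_le 0 using 2
    linear_combination x 0 * hy - y 0 * hx

lemma norm_sub_le_of_sector_eq {a b : K} (hb : b ≠ 0) (hsector : v.sector a = v.sector b)
    (hba : v.norm b ≤ v.norm a) :
    v.norm (a - b) ≤ v.norm a ^ 2 / (2 ^ v.degree * v.norm b) := by
  cases v with
  | archimedean φ n hn =>
    have hφ : ‖φ b‖ ≤ ‖φ a‖ := le_of_pow_le_pow_left₀ hn (_root_.norm_nonneg _) hba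
    have hfloor : ⌊2 * (φ a).arg⌋ = ⌊2 * (φ b).arg⌋ := congrArg Subtype.val hsector
    have harg := abs_arg_sub_le_of_floor_eq hfloor
    simp only [norm_archimedean_apply, degree, map_sub, ← mul_pow, ← pow_mul, mul_comm n 2]
    rw [pow_mul, ← div_pow]
    gcongr
    exact norm_sub_le_of_abs_arg_sub_le harg ((map_ne_zero φ).mpr hb) hφ
  | nonarchimedean A hA =>
    have hb' : 0 < A b := A.pos hb
    simp only [norm_nonarchimedean_apply, degree, pow_zero, one_mul] at hba ⊢
    calc A (a - b) ≤ A a := by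
          rw [sub_eq_add_neg]
          exact (hA a (-b)).trans (max_le le_rfl ((A.map_neg b).trans_le hba))
      _ ≤ A a ^ 2 / A b := by
          rw [le_div_iff₀ hb', sq]
          gcongr

variable (v) in
/-- The logarithm of the normalized absolute value of a place; it is `0` at `0`. -/
noncomputable def logNorm (a : K) : ℝ :=
  Real.log (v.norm a)

variable (v) in
lemma logNorm_one : v.logNorm 1 = 0 := by
  simp [logNorm]

variable (v) in
lemma logNorm_neg (a : K) : v.logNorm (-a) = v.logNorm a := by
  rw [logNorm, v.norm_neg, logNorm]

lemma logNorm_le_iff {a : K} (ha : a ≠ 0) {m : ℝ} : v.logNorm a ≤ m ↔ v.norm a ≤ Real.exp m :=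
  Real.log_le_iff_le_exp (v.norm_pos ha)

lemma logNorm_le_of_add_eq_zero {a b c : K} (ha : a ≠ 0) (hb : b ≠ 0) (hc : c ≠ 0)
    (hsum : a + b + c = 0) {m : ℝ} (hbm : v.logNorm b ≤ m) (hcm : v.logNorm c ≤ m) :
    v.logNorm a ≤ v.degree * Real.log 2 + m := by
  rw [logNorm_le_iff hb] at hbm
  rw [logNorm_le_iff hc] at hcm
  rw [logNorm_le_iff ha, Real.exp_add, Real.exp_nat_mul, Real.exp_log two_pos,
    show a = -(b + c) by linear_combination hsum, v.norm_neg]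
  exact v.norm_add_le hbm hcm

lemma logNorm_sub_le_of_sector_eq {a b : K} (ha : a ≠ 0) (hb : b ≠ 0) (hab : a ≠ b)
    (hsector : v.sector a = v.sector b) :
    v.logNorm (a - b) ≤ -(v.degree * Real.log 2) + (v.logNorm a + v.logNorm b) / 2
      + 3 / 2 * |v.logNorm a - v.logNorm b| := by
  wlog hba : v.norm b ≤ v.norm a generalizing a b
  · have := this hb ha hab.symm hsector.symm (le_of_not_ge hba)
    rwa [← neg_sub, logNorm_neg, abs_sub_comm, add_comm (v.logNorm a)]
  have hlog : v.logNorm b ≤ v.logNorm a := Real.log_le_log (v.norm_pos hb) hba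
  have hlog_sub := Real.log_le_log (v.norm_pos (sub_ne_zero.mpr hab))
    (norm_sub_le_of_sector_eq hb hsector hba)
  have ha' := v.norm_pos ha
  have hb' := v.norm_pos hb
  rw [Real.log_div (by positivity) (by positivity), Real.log_mul (by positivity) (by positivity),
    Real.log_pow, Real.log_pow] at hlog_sub
  rw [abs_of_nonneg (sub_nonneg.mpr hlog)]
  simp only [logNorm] at hlog_sub ⊢
  push_cast at hlog_sub
  linarith

end NormalizedPlace

section Spread

variable {α : Type*}

/-- The oscillation of a real-valued family. -/
noncomputable def spread (f : α → ℝ) : ℝ :=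
  (⨆ i, f i) - ⨅ i, f i

/-- An index at which a finite nonempty family is minimal. -/
noncomputable def argMin [Finite α] [Nonempty α] (f : α → ℝ) : α :=
  (exists_eq_ciInf_of_finite (f := f)).choose

lemma apply_argMin [Finite α] [Nonempty α] (f : α → ℝ) :
    f (argMin f) = (⨆ i, f i) - spread f := by
  rw [argMin, (exists_eq_ciInf_of_finite (f := f)).choose_spec, spread, sub_sub_cancel]

lemma spread_nonneg [Finite α] [Nonempty α] (f : α → ℝ) : 0 ≤ spread f :=
  sub_nonneg.mpr (ciInf_le_ciSup (Set.finite_range f).bddBelow (Set.finite_range f).bddAbove)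

lemma three_mul_iSup_sub_spread_sub_le_sum {f : Fin 3 → ℝ} {k : ℝ}
    (h : ∀ i m, (∀ j ≠ i, f j ≤ m) → f i ≤ k + m) :
    3 * (⨆ i, f i) - spread f - k ≤ ∑ i, f i := by
  obtain ⟨i, hi⟩ := exists_eq_ciSup_of_finite (f := f)
  have hinf : ∀ j, ⨅ i, f i ≤ f j := ciInf_le (Set.finite_range f).bddBelow
  have others_le : ∀ j ≠ i, f j ≤ (∑ l, f l) - f i - ⨅ l, f l := by
    intro j hj
    rw [Fin.sum_univ_three]
    clear hi
    fin_cases i <;> fin_cases j <;> simp at hj ⊢ <;> linarith [hinf 0, hinf 1, hinf 2]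
  have := h i _ others_le
  rw [spread, ← hi]
  linarith

lemma one_sub_mul_min_le_sum_min {ι : Type*} [Fintype ι] {S : Finset ι} {w w' : ι → ℝ}
    (hw : ∀ v, 0 ≤ w v) (hw' : ∀ v, 0 ≤ w' v) (hW : 0 < ∑ v, w v) (hW' : 0 < ∑ v, w' v)
    {ε : ℝ} (hε : 0 ≤ ε) (hoff : ∀ v ∉ S, w v = w' v)
    (hclose : ∀ v ∈ S, w' v / ∑ u, w' u ≤ w v / ∑ u, w u + ε / S.card) {e : ℝ} (he : 1 ≤ e) :
    (1 - ε) * min (e * ∑ v, w v) (∑ v, w' v) ≤ ∑ v, min (e * w v) (w' v) := by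
  set W := ∑ v, w v
  set W' := ∑ v, w' v
  set m := min (e * W) W'
  have he₀ : 0 ≤ e := zero_le_one.trans he
  have hm : 0 ≤ m := le_min (by positivity) hW'.le
  have share_mul_le (v : ι) : w' v / W' * m ≤ w' v := calc
    w' v / W' * m ≤ w' v / W' * W' := by
      gcongr
      · exact div_nonneg (hw' v) hW'.le
      · exact min_le_right _ _
    _ = w' v := div_mul_cancel₀ _ hW'.ne'
  have term_le (v : ι) :
      (w' v / W' - if v ∈ S then ε / S.card else 0) * m ≤ min (e * w v) (w' v) := by
    by_cases hv : v ∈ S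
    · rw [if_pos hv]
      refine le_min ?_ ((mul_le_mul_of_nonneg_right ?_ hm).trans (share_mul_le v))
      · calc (w' v / W' - ε / S.card) * m ≤ w v / W * (e * W) := by
              gcongr
              · exact div_nonneg (hw v) hW.le
              · linarith [hclose v hv]
              · exact min_le_left _ _
          _ = e * w v := by field_simp
      · exact sub_le_self _ (by positivity)
    · rw [if_neg hv, sub_zero, hoff v hv]
      exact (share_mul_le v).trans (le_min (le_mul_of_one_le_left (hw' v) he) le_rfl)
  have sum_shares : 1 - ε ≤ ∑ v, (w' v / W' - if v ∈ S then ε / S.card else 0) := by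
    rw [Finset.sum_sub_distrib, ← Finset.sum_div, div_self hW'.ne', Finset.sum_ite_mem,
      Finset.univ_inter, Finset.sum_const, nsmul_eq_mul, mul_div_left_comm]
    gcongr
    exact mul_le_of_le_one_right hε (div_self_le_one _)
  calc (1 - ε) * m ≤ (∑ v, (w' v / W' - if v ∈ S then ε / S.card else 0)) * m := by gcongr
    _ ≤ ∑ v, min (e * w v) (w' v) := by
      rw [Finset.sum_mul]
      exact Finset.sum_le_sum fun v _ ↦ term_le v

end Spread

/-- The vector `(a, 1 - a, -1)`, which sums to zero. -/
def unitTriple {K : Type*} [Field K] (a : K) : Fin 3 → K :=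
  ![a, 1 - a, -1]

namespace NormalizedPlace

variable {K : Type*} [Field K] (v : NormalizedPlace K) (a : K)

/-- The logarithms of the normalized absolute values of `a`, `1 - a` and `-1`. -/
noncomputable def unitLogs (i : Fin 3) : ℝ :=
  v.logNorm (unitTriple a i)

/-- The local logarithmic height of the point `[a : 1 - a : -1]`. -/
noncomputable def height : ℝ :=
  ⨆ i, v.unitLogs a i

lemma unitLogs_two : v.unitLogs a 2 = 0 := by
  simp [unitLogs, unitTriple, logNorm_neg, logNorm_one]

lemma unitLogs_le_height (i : Fin 3) : v.unitLogs a i ≤ v.height a :=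
  le_ciSup (Set.finite_range _).bddAbove i

lemma height_nonneg : 0 ≤ v.height a :=
  (v.unitLogs_two a).symm.trans_le (v.unitLogs_le_height a 2)

variable {v a}

lemma norm_unitTriple_le (ha : ∀ i, unitTriple a i ≠ 0) (i : Fin 3) :
    v.norm (unitTriple a i) ≤ Real.exp (v.height a) :=
  (logNorm_le_iff (ha i)).mp (v.unitLogs_le_height a i)

lemma norm_unitTriple_argMin_le (ha : ∀ i, unitTriple a i ≠ 0) :
    v.norm (unitTriple a (argMin (v.unitLogs a)))
      ≤ Real.exp (v.height a - spread (v.unitLogs a)) :=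
  (logNorm_le_iff (ha _)).mp (apply_argMin (v.unitLogs a)).le

lemma three_mul_height_le (ha : ∀ i, unitTriple a i ≠ 0) :
    3 * v.height a - spread (v.unitLogs a) - v.degree * Real.log 2 ≤ ∑ i, v.unitLogs a i := by
  refine three_mul_iSup_sub_spread_sub_le_sum fun i m hm ↦ ?_
  have hsum : unitTriple a i + unitTriple a (i + 1) + unitTriple a (i + 2) = 0 := by
    fin_cases i <;> simp [unitTriple, sub_add_eq_add_sub]
  exact logNorm_le_of_add_eq_zero (ha _) (ha _) (ha _) hsum (hm _ (by simp)) (hm _ (by simp))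

/-- The local estimate behind the gap principle: at the index where both triples are smallest,
one row of the determinant gains the factor `exp (-e * spread)` or `exp (-spread)`. -/
lemma logNorm_det_le {b : K} (ha : ∀ i, unitTriple a i ≠ 0) (hb : ∀ i, unitTriple b i ≠ 0)
    (hmin : argMin (v.unitLogs a) = argMin (v.unitLogs b)) {q : Fin 3 → K} {e p r : ℕ}
    (hq : ∀ i, v.norm (q i) ≤ (2 ^ v.degree) ^ p * Real.exp (v.height a) ^ r)
    (hsum : ∑ i, unitTriple a i ^ e * q i = 0)
    (hdet : unitTriple a 0 ^ e * q 0 * unitTriple b 1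
      - unitTriple a 1 ^ e * q 1 * unitTriple b 0 ≠ 0) :
    v.logNorm (unitTriple a 0 ^ e * q 0 * unitTriple b 1
        - unitTriple a 1 ^ e * q 1 * unitTriple b 0)
      ≤ (p + 1) * (v.degree * Real.log 2) + (e + r) * v.height a + v.height b
        - min (e * spread (v.unitLogs a)) (spread (v.unitLogs b)) := by
  set gain := min (e * spread (v.unitLogs a)) (spread (v.unitLogs b))
  have hsum_b : ∑ i, unitTriple b i = 0 := by simp [Fin.sum_univ_three, unitTriple]
  have product_le {i j : Fin 3} {s t : ℝ} (hi : v.norm (unitTriple a i) ≤ Real.exp s)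
      (hj : v.norm (unitTriple b j) ≤ Real.exp t)
      (hst : e * s + t ≤ e * v.height a + v.height b - gain) :
      v.norm (unitTriple a i ^ e * q i * unitTriple b j)
        ≤ (2 ^ v.degree) ^ p * Real.exp ((e + r) * v.height a + v.height b - gain) := calc
    _ ≤ Real.exp s ^ e * ((2 ^ v.degree) ^ p * Real.exp (v.height a) ^ r) * Real.exp t := by
      have := v.norm_nonneg
      rw [map_mul, map_mul, map_pow]
      gcongr
      · apply this
      · apply this
      · apply this
      · exact hq i
    _ = (2 ^ v.degree) ^ p * Real.exp (e * s + r * v.height a + t) := by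
      rw [Real.exp_add, Real.exp_add, Real.exp_nat_mul, Real.exp_nat_mul]
      ring
    _ ≤ _ := by
      gcongr
      linarith
  have norm_det_le := norm_mul_sub_mul_le hsum hsum_b (argMin (v.unitLogs a))
    (fun j ↦ product_le (norm_unitTriple_argMin_le ha) (norm_unitTriple_le hb j)
      (by linarith [min_le_left (e * spread (v.unitLogs a)) (spread (v.unitLogs b))]))
    (fun j ↦ product_le (norm_unitTriple_le ha j) (hmin ▸ norm_unitTriple_argMin_le hb)
      (by linarith [min_le_right (e * spread (v.unitLogs a)) (spread (v.unitLogs b))]))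
  rw [← mul_assoc, ← pow_succ'] at norm_det_le
  have log_le := Real.log_le_log (v.norm_pos hdet) norm_det_le
  rw [Real.log_mul (by positivity) (Real.exp_ne_zero _), Real.log_exp, Real.log_pow,
    Real.log_pow] at log_le
  push_cast at log_le
  exact log_le.trans_eq (by ring)

end NormalizedPlace

section UnitEquation

open NormalizedPlace

variable {K : Type*} [Field K]

/-- A unit `a` of a subring `R` of a field, such that `1 - a` is also a unit of `R`. -/
structure IsExceptionalUnit (R : Subring K) (a : K) : Prop where
  ne_zero : a ≠ 0
  one_sub_ne_zero : 1 - a ≠ 0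
  mem : a ∈ R
  inv_mem : a⁻¹ ∈ R
  one_sub_inv_mem : (1 - a)⁻¹ ∈ R

namespace IsExceptionalUnit

variable {R : Subring K} {a : K}

lemma unitTriple_ne_zero (ha : IsExceptionalUnit R a) (i : Fin 3) : unitTriple a i ≠ 0 := by
  fin_cases i <;> simp [unitTriple, ha.ne_zero, ha.one_sub_ne_zero]

lemma unitTriple_mem (ha : IsExceptionalUnit R a) (i : Fin 3) : unitTriple a i ∈ R := by
  fin_cases i <;> simp [unitTriple, ha.mem, R.sub_mem R.one_mem ha.mem]

lemma unitTriple_inv_mem (ha : IsExceptionalUnit R a) (i : Fin 3) : (unitTriple a i)⁻¹ ∈ R := by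
  fin_cases i <;> simp [unitTriple, ha.inv_mem, ha.one_sub_inv_mem]

end IsExceptionalUnit

section PadeMem

variable {R : Subring K}

lemma padeSum_mem (M L : ℕ) {α β : K} (hα : α ∈ R) (hβ : β ∈ R) : padeSum M L α β ∈ R :=
  R.sum_mem fun _ _ ↦ R.mul_mem
    (R.mul_mem (R.mul_mem (R.pow_mem (R.neg_mem R.one_mem) _) (natCast_mem R _)) (natCast_mem R _))
    (R.mul_mem (R.pow_mem hα _) (R.pow_mem hβ _))

lemma padeFst_mem (M : ℕ) {x : Fin 3 → K} (hx : ∀ i, x i ∈ R) (i : Fin 3) :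
    padeFst M x i ∈ R :=
  padeSum_mem M M (hx _) (R.neg_mem (hx _))

lemma padeSnd_mem (M : ℕ) {x : Fin 3 → K} (hx : ∀ i, x i ∈ R) (i : Fin 3) :
    padeSnd M x i ∈ R := by
  have cubicRoot_mem : cubicRoot x i ∈ R := by
    fin_cases i
    · simpa [cubicRoot] using hx 1
    · simpa [cubicRoot] using hx 0
    · simp [cubicRoot]
  exact R.add_mem (padeSum_mem M _ (hx _) (R.neg_mem (hx _)))
    (R.mul_mem cubicRoot_mem (padeFst_mem M hx i))

end PadeMem

variable {ι : Type*} [Fintype ι]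

/-- A finite family of places containing an archimedean one, with all its archimedean places in
`S`, for which the nonzero elements of `R` have norm at least `1`, as the elements of a ring of
integers do by the product formula. -/
structure IsArithmetic (P : ι → NormalizedPlace K) (S : Finset ι) (R : Subring K) : Prop where
  sum_logNorm_nonneg : ∀ x ∈ R, x ≠ 0 → 0 ≤ ∑ v, (P v).logNorm x
  exists_degree_ne_zero : ∃ v, (P v).degree ≠ 0
  mem_of_degree_ne_zero : ∀ v, (P v).degree ≠ 0 → v ∈ S

section Totals

variable (P : ι → NormalizedPlace K)

/-- The sum of the local degrees. -/
noncomputable def totalDegree : ℝ :=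
  ∑ v, ((P v).degree : ℝ)

/-- The logarithmic height of the point `[a : 1 - a : -1]`. -/
noncomputable def totalHeight (a : K) : ℝ :=
  ∑ v, (P v).height a

/-- The sum of the local spreads of the triple attached to `a`. It is comparable to three times the
height, and it measures the size of a solution of the unit equation. -/
noncomputable def totalSpread (a : K) : ℝ :=
  ∑ v, spread ((P v).unitLogs a)

end Totals

namespace IsArithmetic

variable {P : ι → NormalizedPlace K} {S : Finset ι} {R : Subring K} {a b : K}

lemma one_le_totalDegree (hP : IsArithmetic P S R) : 1 ≤ totalDegree P := by
  obtain ⟨v, hv⟩ := hP.exists_degree_ne_zero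
  have degree_le := Finset.single_le_sum (f := fun u ↦ (P u).degree) (fun _ _ ↦ Nat.zero_le _)
    (Finset.mem_univ v)
  rw [totalDegree]
  exact_mod_cast (Nat.one_le_iff_ne_zero.mpr hv).trans degree_le

lemma card_pos (hP : IsArithmetic P S R) : 0 < S.card := by
  obtain ⟨v, hv⟩ := hP.exists_degree_ne_zero
  exact Finset.card_pos.mpr ⟨v, hP.mem_of_degree_ne_zero v hv⟩

lemma sum_unitLogs_eq_zero (hP : IsArithmetic P S R) (ha : IsExceptionalUnit R a) (i : Fin 3) :
    ∑ v, (P v).unitLogs a i = 0 := by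
  have nonneg := hP.sum_logNorm_nonneg _ (ha.unitTriple_mem i) (ha.unitTriple_ne_zero i)
  have inv_nonneg := hP.sum_logNorm_nonneg _ (ha.unitTriple_inv_mem i)
    (inv_ne_zero (ha.unitTriple_ne_zero i))
  simp only [logNorm, map_inv₀, Real.log_inv, Finset.sum_neg_distrib] at inv_nonneg
  exact le_antisymm (neg_nonneg.mp inv_nonneg) nonneg

lemma three_mul_totalHeight_le (hP : IsArithmetic P S R) (ha : IsExceptionalUnit R a) :
    3 * totalHeight P a ≤ totalSpread P a + totalDegree P * Real.log 2 := by
  have local_le := Finset.sum_le_sum fun v (_ : v ∈ Finset.univ) ↦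
    three_mul_height_le (v := P v) ha.unitTriple_ne_zero
  rw [Finset.sum_comm] at local_le
  simp only [Finset.sum_sub_distrib, hP.sum_unitLogs_eq_zero ha, ← Finset.mul_sum,
    ← Finset.sum_mul, Finset.sum_const_zero] at local_le
  simp only [totalHeight, totalSpread, totalDegree]
  linarith

/-- The gap principle: a nonzero determinant is a nonzero element of `R`, so its norm is at
least `1`. -/
lemma sum_min_le (hP : IsArithmetic P S R) (ha : IsExceptionalUnit R a)
    (hb : IsExceptionalUnit R b)
    (hmin : ∀ v, argMin ((P v).unitLogs a) = argMin ((P v).unitLogs b))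
    {q : Fin 3 → K} {e p r : ℕ} (hqR : ∀ i, q i ∈ R)
    (hq : ∀ v i, (P v).norm (q i) ≤ (2 ^ (P v).degree) ^ p * Real.exp ((P v).height a) ^ r)
    (hsum : ∑ i, unitTriple a i ^ e * q i = 0)
    (hdet : unitTriple a 0 ^ e * q 0 * unitTriple b 1
      - unitTriple a 1 ^ e * q 1 * unitTriple b 0 ≠ 0) :
    ∑ v, min (e * spread ((P v).unitLogs a)) (spread ((P v).unitLogs b))
      ≤ (p + 1) * (totalDegree P * Real.log 2) + (e + r) * totalHeight P a + totalHeight P b := by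
  have det_mem : unitTriple a 0 ^ e * q 0 * unitTriple b 1
      - unitTriple a 1 ^ e * q 1 * unitTriple b 0 ∈ R :=
    R.sub_mem
      (R.mul_mem (R.mul_mem (R.pow_mem (ha.unitTriple_mem _) _) (hqR _)) (hb.unitTriple_mem _))
      (R.mul_mem (R.mul_mem (R.pow_mem (ha.unitTriple_mem _) _) (hqR _)) (hb.unitTriple_mem _))
  have local_le := Finset.sum_le_sum fun v (_ : v ∈ Finset.univ) ↦
    logNorm_det_le ha.unitTriple_ne_zero hb.unitTriple_ne_zero (hmin v) (hq v) hsum hdet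
  simp only [Finset.sum_add_distrib, Finset.sum_sub_distrib, ← Finset.mul_sum,
    ← Finset.sum_mul] at local_le
  have := hP.sum_logNorm_nonneg _ det_mem hdet
  simp only [totalHeight, totalDegree]
  linarith

/-- One of the two Padé approximants to `unitTriple a` is independent of `unitTriple b`. -/
lemma sum_min_pade_le [CharZero K] (hP : IsArithmetic P S R) (ha : IsExceptionalUnit R a)
    (hb : IsExceptionalUnit R b)
    (hmin : ∀ v, argMin ((P v).unitLogs a) = argMin ((P v).unitLogs b)) {M : ℕ} (hM : 1 ≤ M) :
    ∑ v, min ((2 * M + 1) * spread ((P v).unitLogs a)) (spread ((P v).unitLogs b))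
      ≤ (4 * M + 2) * (totalDegree P * Real.log 2) + (3 * M + 2) * totalHeight P a
        + totalHeight P b := by
  set x := unitTriple a
  have hx := ha.unitTriple_ne_zero
  have hsum : x 0 + x 1 + x 2 = 0 := by simp [x, unitTriple]
  have norm_le (v) (i) := norm_unitTriple_le (v := P v) hx i
  obtain hdet | hdet : (x 0 ^ (2 * M + 1) * padeFst M x 0 * unitTriple b 1
      - x 1 ^ (2 * M + 1) * padeFst M x 1 * unitTriple b 0 ≠ 0) ∨
      (x 0 ^ (2 * M + 1) * padeSnd M x 0 * unitTriple b 1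
      - x 1 ^ (2 * M + 1) * padeSnd M x 1 * unitTriple b 0 ≠ 0) := by
    by_contra! h
    refine mul_ne_zero (mul_ne_zero (mul_ne_zero (pow_ne_zero (2 * M + 1) (hx 0))
      (pow_ne_zero (2 * M + 1) (hx 1))) (hb.unitTriple_ne_zero 0))
      (padeFst_mul_padeSnd_sub_ne_zero hx hsum hM) ?_
    linear_combination (x 0 ^ (2 * M + 1) * padeSnd M x 0) * h.1
      - (x 0 ^ (2 * M + 1) * padeFst M x 0) * h.2
  · have padeFst_le (v) (i) : (P v).norm (padeFst M x i)
        ≤ (2 ^ (P v).degree) ^ (4 * M + 1) * Real.exp ((P v).height a) ^ (M + 1) := by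
      refine (norm_padeFst_le M (norm_le v) i).trans ?_
      gcongr
      · exact one_le_pow₀ one_le_two
      · lia
      · exact Real.one_le_exp ((P v).height_nonneg a)
      · lia
    have := hP.sum_min_le ha hb hmin (padeFst_mem M ha.unitTriple_mem) padeFst_le
      (sum_pow_mul_padeFst hx hsum M) hdet
    push_cast at this
    linarith
  · have := hP.sum_min_le ha hb hmin (padeSnd_mem M ha.unitTriple_mem)
      (fun v ↦ norm_padeSnd_le hM (norm_le v)) (sum_pow_mul_padeSnd hx hsum hM) hdet
    push_cast at this
    linarith

lemma thirty_mul_totalDegree_mul_log_two_lt (hP : IsArithmetic P S R)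
    (ha : 21 * totalDegree P < totalSpread P a) :
    30 * (totalDegree P * Real.log 2) < totalSpread P a := by
  nlinarith [hP.one_le_totalDegree, Real.log_two_lt_d9]

end IsArithmetic

section LargeSolutions

variable (P : ι → NormalizedPlace K) (S : Finset ι)

/-- The class of a large solution: at each place of `S`, the index of the smallest of the three
absolute values, and the share of the place in the total spread, to the precision
`1 / (24 * S.card)`. -/
noncomputable def spreadLabel (a : K) (v : S) : Fin 3 × ℕ :=
  (argMin ((P v).unitLogs a),
    ⌊24 * S.card * (spread ((P v).unitLogs a) / totalSpread P a)⌋₊)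

variable {P S} {R : Subring K} {a b : K}

lemma argMin_eq_of_spreadLabel_eq (hoff : ∀ v ∉ S, (P v).unitLogs a = (P v).unitLogs b)
    (hlabel : spreadLabel P S a = spreadLabel P S b) (v : ι) :
    argMin ((P v).unitLogs a) = argMin ((P v).unitLogs b) := by
  by_cases hv : v ∈ S
  · exact congrArg Prod.fst (congrFun hlabel ⟨v, hv⟩)
  · rw [hoff v hv]

lemma mul_min_totalSpread_le (ha : 0 < totalSpread P a) (hb : 0 < totalSpread P b)
    (hoff : ∀ v ∉ S, (P v).unitLogs a = (P v).unitLogs b)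
    (hlabel : spreadLabel P S a = spreadLabel P S b) {e : ℝ} (he : 1 ≤ e) :
    23 / 24 * min (e * totalSpread P a) (totalSpread P b)
      ≤ ∑ v, min (e * spread ((P v).unitLogs a)) (spread ((P v).unitLogs b)) := by
  have share_le : ∀ v ∈ S, spread ((P v).unitLogs b) / totalSpread P b
      ≤ spread ((P v).unitLogs a) / totalSpread P a + 1 / 24 / S.card := by
    intro v hv
    have hS : (0 : ℝ) < S.card := Nat.cast_pos.mpr (Finset.card_pos.mpr ⟨v, hv⟩)
    have hfloor : ⌊24 * S.card * (spread ((P v).unitLogs a) / totalSpread P a)⌋₊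
        = ⌊24 * S.card * (spread ((P v).unitLogs b) / totalSpread P b)⌋₊ :=
      congrArg Prod.snd (congrFun hlabel ⟨v, hv⟩)
    have share_nonneg := div_nonneg (spread_nonneg ((P v).unitLogs a)) ha.le
    have hlt := Nat.lt_floor_add_one (24 * S.card * (spread ((P v).unitLogs b) / totalSpread P b))
    have hle := Nat.floor_le
      (a := 24 * S.card * (spread ((P v).unitLogs a) / totalSpread P a)) (by positivity)
    rw [← hfloor] at hlt
    rw [← mul_le_mul_iff_right₀ (show (0 : ℝ) < 24 * S.card by positivity), mul_add]
    have : (24 * S.card * (1 / 24 / S.card) : ℝ) = 1 := by field_simp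
    linarith
  have := one_sub_mul_min_le_sum_min (fun v ↦ spread_nonneg ((P v).unitLogs a))
    (fun v ↦ spread_nonneg ((P v).unitLogs b)) ha hb (by norm_num : (0 : ℝ) ≤ 1 / 24)
    (fun v hv ↦ by rw [hoff v hv]) share_le he
  norm_num at this ⊢
  exact this

lemma sum_spreadLabel_le (ha : 0 < totalSpread P a) :
    ∑ v, (spreadLabel P S a v).2 ≤ 24 * S.card := by
  have hterm (v : S) : ((spreadLabel P S a v).2 : ℝ)
      ≤ 24 * S.card * (spread ((P v).unitLogs a) / totalSpread P a) :=
    Nat.floor_le (mul_nonneg (by positivity) (div_nonneg (spread_nonneg _) ha.le))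
  have sum_le : ∑ v : S, spread ((P v).unitLogs a) ≤ totalSpread P a := by
    rw [Finset.sum_coe_sort S fun v ↦ spread ((P v).unitLogs a)]
    exact Finset.sum_le_univ_sum_of_nonneg fun v ↦ spread_nonneg _
  have : (∑ v, (spreadLabel P S a v).2 : ℝ) ≤ 24 * S.card := calc
    _ ≤ 24 * S.card * ((∑ v : S, spread ((P v).unitLogs a)) / totalSpread P a) := by
      rw [Finset.sum_div, Finset.mul_sum]
      exact Finset.sum_le_sum fun v _ ↦ hterm v
    _ ≤ 24 * S.card := mul_le_of_le_one_right (by positivity) ((div_le_one ha).mpr sum_le)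
  exact_mod_cast this

namespace IsArithmetic

lemma three_halves_mul_totalSpread_le (hP : IsArithmetic P S R) (ha : IsExceptionalUnit R a)
    (hb : IsExceptionalUnit R b) (hab : a ≠ b) (hlarge : 21 * totalDegree P < totalSpread P a)
    (hle : totalSpread P a ≤ totalSpread P b)
    (hoff : ∀ v ∉ S, (P v).unitLogs a = (P v).unitLogs b)
    (hlabel : spreadLabel P S a = spreadLabel P S b) :
    3 / 2 * totalSpread P a ≤ totalSpread P b := by
  have hD := hP.one_le_totalDegree
  have hWa : 0 < totalSpread P a := by linarith
  have hdet : unitTriple a 0 ^ 1 * 1 * unitTriple b 1 - unitTriple a 1 ^ 1 * 1 * unitTriple b 0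
      ≠ 0 := by
    simp only [unitTriple, pow_one, mul_one, Matrix.cons_val_zero, Matrix.cons_val_one]
    exact fun h ↦ hab (by linear_combination h)
  have hgap := hP.sum_min_le (q := 1) (p := 0) (r := 0) ha hb
    (argMin_eq_of_spreadLabel_eq hoff hlabel) (fun _ ↦ R.one_mem) (by simp)
    (by simp [Fin.sum_univ_three, unitTriple]) hdet
  have hmin := mul_min_totalSpread_le hWa (hWa.trans_le hle) hoff hlabel le_rfl
  rw [one_mul, min_eq_left hle] at hmin
  push_cast at hgap
  linarith [hP.three_mul_totalHeight_le ha, hP.three_mul_totalHeight_le hb,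
    hP.thirty_mul_totalDegree_mul_log_two_lt hlarge]

lemma totalSpread_lt [CharZero K] (hP : IsArithmetic P S R) (ha : IsExceptionalUnit R a)
    (hb : IsExceptionalUnit R b) (hlarge : 21 * totalDegree P < totalSpread P a)
    (hoff : ∀ v ∉ S, (P v).unitLogs a = (P v).unitLogs b)
    (hlabel : spreadLabel P S a = spreadLabel P S b) :
    totalSpread P b < 21 * totalSpread P a := by
  by_contra! hge
  have hD := hP.one_le_totalDegree
  have hWa : 0 < totalSpread P a := by linarith
  set M := ⌊(totalSpread P b / totalSpread P a - 1) / 2⌋₊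
  have hratio : 21 ≤ totalSpread P b / totalSpread P a := (le_div_iff₀ hWa).mpr hge
  have hM : 10 ≤ M := Nat.le_floor (by push_cast; linarith)
  have lower : (2 * M + 1) * totalSpread P a ≤ totalSpread P b := by
    rw [← le_div_iff₀ hWa]
    have := Nat.floor_le (a := (totalSpread P b / totalSpread P a - 1) / 2) (by linarith)
    linarith
  have upper : totalSpread P b ≤ (2 * M + 3) * totalSpread P a := by
    rw [← div_le_iff₀ hWa]
    have := Nat.lt_floor_add_one ((totalSpread P b / totalSpread P a - 1) / 2)
    linarith
  have hpade := hP.sum_min_pade_le ha hb (argMin_eq_of_spreadLabel_eq hoff hlabel)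
    (M := M) (by lia)
  have hmin := mul_min_totalSpread_le (e := 2 * M + 1) hWa (by linarith) hoff hlabel
    (by linarith [M.cast_nonneg (α := ℝ)])
  rw [min_eq_left lower] at hmin
  have heights_a := mul_le_mul_of_nonneg_left (hP.three_mul_totalHeight_le ha)
    (by positivity : (0 : ℝ) ≤ 3 * M + 2)
  have logs_le := mul_le_mul_of_nonneg_left
    (hP.thirty_mul_totalDegree_mul_log_two_lt hlarge).le (by positivity : (0 : ℝ) ≤ 15 * M + 9)
  have : (10 : ℝ) * totalSpread P a ≤ M * totalSpread P a := by
    gcongr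
    exact_mod_cast hM
  linarith [hP.three_mul_totalHeight_le hb]

lemma card_le_of_large [CharZero K] (hP : IsArithmetic P S R) {F : Finset K}
    (hF : ∀ a ∈ F, IsExceptionalUnit R a)
    (hlarge : ∀ a ∈ F, 21 * totalDegree P < totalSpread P a)
    (hoff : ∀ a ∈ F, ∀ b ∈ F, ∀ v ∉ S, (P v).unitLogs a = (P v).unitLogs b) :
    (F.card : ℝ) ≤ 8 * 225 ^ S.card := by
  have hD := hP.one_le_totalDegree
  have hpos : ∀ a ∈ F, 0 < totalSpread P a := fun a ha ↦ by linarith [hlarge a ha]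
  have class_card_le : ∀ a₀ ∈ F,
      (F.filter fun a ↦ spreadLabel P S a = spreadLabel P S a₀).card ≤ 8 := by
    intro a₀ _
    refine card_le_of_geometric_growth (W := totalSpread P) (q := 3 / 2) (by norm_num) ?_ ?_ ?_
    · exact fun a ha ↦ hpos a (Finset.mem_of_mem_filter a ha)
    · intro a ha b hb hab hle
      rw [Finset.mem_filter] at ha hb
      exact hP.three_halves_mul_totalSpread_le (hF a ha.1) (hF b hb.1) hab (hlarge a ha.1) hle
        (hoff a ha.1 b hb.1) (ha.2.trans hb.2.symm)
    · intro a ha b hb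
      rw [Finset.mem_filter] at ha hb
      have := hP.totalSpread_lt (hF a ha.1) (hF b hb.1) (hlarge a ha.1) (hoff a ha.1 b hb.1)
        (ha.2.trans hb.2.symm)
      linarith [hpos a ha.1]
  have weight_le (A : Finset (Fin 3 × ℕ)) :
      ∑ a ∈ A, ((24 : ℕ) / ((24 : ℕ) + 1) : ℝ) ^ a.2 ≤ 75 :=
    (sum_pow_snd_le (g := id) (by norm_num)
      (sum_pow_le_inv_one_sub (by norm_num) (by norm_num)) A).trans (by norm_num)
  have := card_le_of_labels (N := 24) (label := spreadLabel P S) (g := Prod.snd) (by norm_num)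
    (fun a ha ↦ by simpa using sum_spreadLabel_le (hpos a ha)) class_card_le weight_le
  norm_num at this
  exact this

end IsArithmetic

end LargeSolutions

section SmallSolutions

variable (P : ι → NormalizedPlace K) (S : Finset ι)

/-- The box of a small solution: at each place of `S`, the sector that contains it, and the
logarithm of its norm to the precision `2 / 5 * totalDegree P / S.card`. -/
noncomputable def sectorLabel (a : K) (v : S) : Finset.Icc (-7 : ℤ) 6 × ℤ :=
  ((P v).sector a, ⌊(P v).logNorm a / (2 / 5 * totalDegree P / S.card)⌋)

variable {P S} {R : Subring K} {a b : K}

namespace IsArithmetic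

lemma sum_abs_logNorm_le (hP : IsArithmetic P S R) (ha : IsExceptionalUnit R a) :
    ∑ v, |(P v).logNorm a| ≤ 2 * totalHeight P a := by
  have hterm (v : ι) : |(P v).logNorm a| ≤ 2 * (P v).height a - (P v).logNorm a := by
    have := (P v).height_nonneg a
    have : (P v).logNorm a ≤ (P v).height a := (P v).unitLogs_le_height a 0
    rw [abs_le]
    constructor <;> linarith
  have hsum : ∑ v, (P v).logNorm a = 0 := hP.sum_unitLogs_eq_zero ha 0
  calc ∑ v, |(P v).logNorm a| ≤ ∑ v, (2 * (P v).height a - (P v).logNorm a) :=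
        Finset.sum_le_sum fun v _ ↦ hterm v
    _ = 2 * totalHeight P a := by
        rw [Finset.sum_sub_distrib, hsum, sub_zero, ← Finset.mul_sum, totalHeight]

lemma sum_natAbs_sectorLabel_le (hP : IsArithmetic P S R) (ha : IsExceptionalUnit R a)
    (hsmall : totalSpread P a ≤ 21 * totalDegree P) :
    ∑ v, (sectorLabel P S a v).2.natAbs ≤ 38 * S.card := by
  have hD := hP.one_le_totalDegree
  have hS : (0 : ℝ) < S.card := Nat.cast_pos.mpr hP.card_pos
  set σ := 2 / 5 * totalDegree P / S.card with hσ
  have hσ₀ : 0 < σ := by positivity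
  have natAbs_le (v : S) : ((sectorLabel P S a v).2.natAbs : ℝ) ≤ |(P v).logNorm a| / σ + 1 := by
    rw [Nat.cast_natAbs, Int.cast_abs, ← abs_of_pos hσ₀, ← abs_div, sectorLabel, ← hσ,
      abs_le]
    have := Int.floor_le ((P v).logNorm a / σ)
    have := Int.lt_floor_add_one ((P v).logNorm a / σ)
    constructor <;> linarith [neg_abs_le ((P v).logNorm a / σ), le_abs_self ((P v).logNorm a / σ)]
  have sum_abs_le : ∑ v : S, |(P v).logNorm a| ≤ 37 * (2 / 5 * totalDegree P) := calc
    _ ≤ ∑ v, |(P v).logNorm a| := by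
      rw [Finset.sum_coe_sort S fun v ↦ |(P v).logNorm a|]
      exact Finset.sum_le_univ_sum_of_nonneg fun v ↦ abs_nonneg _
    _ ≤ 2 * totalHeight P a := hP.sum_abs_logNorm_le ha
    _ ≤ _ := by
      have : totalDegree P * Real.log 2 ≤ totalDegree P * 1 := by
        gcongr
        linarith [Real.log_two_lt_d9]
      linarith [hP.three_mul_totalHeight_le ha]
  have : (∑ v, (sectorLabel P S a v).2.natAbs : ℝ) ≤ 38 * S.card := calc
    _ ≤ ∑ v : S, (|(P v).logNorm a| / σ + 1) := Finset.sum_le_sum fun v _ ↦ natAbs_le v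
    _ = (∑ v : S, |(P v).logNorm a|) / σ + S.card := by
      simp [Finset.sum_add_distrib, Finset.sum_div]
    _ ≤ 37 * (2 / 5 * totalDegree P) / σ + S.card := by gcongr
    _ = 38 * S.card := by
      rw [hσ]
      field_simp
      ring
  exact_mod_cast this

lemma sector_eq_of_sectorLabel_eq (hP : IsArithmetic P S R)
    (hlabel : sectorLabel P S a = sectorLabel P S b) (v : ι) :
    (P v).sector a = (P v).sector b := by
  by_cases hv : (P v).degree = 0
  · exact sector_eq_of_degree_eq_zero hv a b
  · exact congrArg Prod.fst (congrFun hlabel ⟨v, hP.mem_of_degree_ne_zero v hv⟩)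

lemma sum_abs_logNorm_sub_le (hP : IsArithmetic P S R)
    (hoff : ∀ v ∉ S, (P v).unitLogs a = (P v).unitLogs b)
    (hlabel : sectorLabel P S a = sectorLabel P S b) :
    ∑ v, |(P v).logNorm a - (P v).logNorm b| ≤ 2 / 5 * totalDegree P := by
  have hD := hP.one_le_totalDegree
  have hS : (0 : ℝ) < S.card := Nat.cast_pos.mpr hP.card_pos
  have hoff' : ∀ v ∉ S, (P v).logNorm a = (P v).logNorm b := fun v hv ↦ congrFun (hoff v hv) 0
  have hσ : 0 < 2 / 5 * totalDegree P / S.card := by positivity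
  have diff_le : ∀ v ∈ S,
      |(P v).logNorm a - (P v).logNorm b| ≤ 2 / 5 * totalDegree P / S.card := by
    intro v hv
    have hfloor := Int.abs_sub_lt_one_of_floor_eq_floor
      (congrArg Prod.snd (congrFun hlabel ⟨v, hv⟩))
    rw [← sub_div, abs_div, abs_of_pos hσ, div_lt_one hσ] at hfloor
    exact hfloor.le
  calc ∑ v, |(P v).logNorm a - (P v).logNorm b|
      = ∑ v ∈ S, |(P v).logNorm a - (P v).logNorm b| :=
        (Finset.sum_subset S.subset_univ fun v _ hv ↦ by simp [hoff' v hv]).symm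
    _ ≤ S.card • (2 / 5 * totalDegree P / S.card) := Finset.sum_le_card_nsmul _ _ _ diff_le
    _ = 2 / 5 * totalDegree P := by
        rw [nsmul_eq_mul]
        field_simp

lemma eq_of_sectorLabel_eq (hP : IsArithmetic P S R) (ha : IsExceptionalUnit R a)
    (hb : IsExceptionalUnit R b) (hoff : ∀ v ∉ S, (P v).unitLogs a = (P v).unitLogs b)
    (hlabel : sectorLabel P S a = sectorLabel P S b) : a = b := by
  by_contra hab
  have local_le := Finset.sum_le_sum fun v (_ : v ∈ Finset.univ) ↦
    logNorm_sub_le_of_sector_eq ha.ne_zero hb.ne_zero hab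
      (hP.sector_eq_of_sectorLabel_eq hlabel v)
  have sum_a : ∑ v, (P v).logNorm a = 0 := hP.sum_unitLogs_eq_zero ha 0
  have sum_b : ∑ v, (P v).logNorm b = 0 := hP.sum_unitLogs_eq_zero hb 0
  simp only [Finset.sum_add_distrib, Finset.sum_neg_distrib, ← Finset.mul_sum, ← Finset.sum_mul,
    ← Finset.sum_div, sum_a, sum_b] at local_le
  rw [← totalDegree] at local_le
  have nonneg := hP.sum_logNorm_nonneg (a - b) (R.sub_mem ha.mem hb.mem) (sub_ne_zero.mpr hab)
  nlinarith [hP.one_le_totalDegree, hP.sum_abs_logNorm_sub_le hoff hlabel, Real.log_two_gt_d9]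

lemma card_le_of_small (hP : IsArithmetic P S R) {F : Finset K}
    (hF : ∀ a ∈ F, IsExceptionalUnit R a)
    (hsmall : ∀ a ∈ F, totalSpread P a ≤ 21 * totalDegree P)
    (hoff : ∀ a ∈ F, ∀ b ∈ F, ∀ v ∉ S, (P v).unitLogs a = (P v).unitLogs b) :
    (F.card : ℝ) ≤ 3234 ^ S.card := by
  have box_card_le : ∀ a₀ ∈ F,
      (F.filter fun a ↦ sectorLabel P S a = sectorLabel P S a₀).card ≤ 1 := by
    intro a₀ _
    refine Finset.card_le_one.mpr fun a ha b hb ↦ ?_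
    rw [Finset.mem_filter] at ha hb
    exact hP.eq_of_sectorLabel_eq (hF a ha.1) (hF b hb.1) (hoff a ha.1 b hb.1)
      (ha.2.trans hb.2.symm)
  have card_sectors : Fintype.card (Finset.Icc (-7 : ℤ) 6) = 14 := by
    rw [Fintype.card_coe, Int.card_Icc]
    rfl
  have weight_le (A : Finset (Finset.Icc (-7 : ℤ) 6 × ℤ)) :
      ∑ a ∈ A, ((38 : ℕ) / ((38 : ℕ) + 1) : ℝ) ^ a.2.natAbs ≤ 1078 :=
    (sum_pow_snd_le (g := Int.natAbs) (by norm_num)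
      (sum_pow_natAbs_le (by norm_num) (by norm_num)) A).trans (by
        rw [card_sectors]
        norm_num)
  have label_le : ∀ a ∈ F, ∑ v, (sectorLabel P S a v).2.natAbs ≤ 38 * Fintype.card S :=
    fun a ha ↦ by
      rw [Fintype.card_coe]
      exact hP.sum_natAbs_sectorLabel_le (hF a ha) (hsmall a ha)
  have := card_le_of_labels (g := fun l ↦ l.2.natAbs) (by norm_num) label_le box_card_le weight_le
  norm_num at this
  exact this

theorem card_exceptionalUnits_le [CharZero K] (hP : IsArithmetic P S R) {F : Finset K}
    (hF : ∀ a ∈ F, IsExceptionalUnit R a)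
    (hoff : ∀ a ∈ F, ∀ b ∈ F, ∀ v ∉ S, (P v).unitLogs a = (P v).unitLogs b) :
    F.card ≤ 2 ^ (16 * S.card) := by
  have small := hP.card_le_of_small (F := F.filter (totalSpread P · ≤ 21 * totalDegree P))
    (by grind) (by grind) (by grind)
  have large := hP.card_le_of_large (F := F.filter (¬ totalSpread P · ≤ 21 * totalDegree P))
    (by grind) (by grind) (by grind)
  have eight_le : (8 : ℝ) ≤ 8 ^ S.card := le_self_pow₀ (by norm_num) hP.card_pos.ne'
  have : (F.card : ℝ) ≤ 2 ^ (16 * S.card) := calc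
    (F.card : ℝ) ≤ 3234 ^ S.card + 8 * 225 ^ S.card := by
      rw [← F.card_filter_add_card_filter_not (totalSpread P · ≤ 21 * totalDegree P)]
      push_cast
      exact add_le_add small large
    _ ≤ 3234 ^ S.card + 8 ^ S.card * 225 ^ S.card := by gcongr
    _ ≤ (3234 + 8 * 225) ^ S.card := by
      rw [← mul_pow]
      exact pow_add_pow_le (by norm_num) (by norm_num) hP.card_pos.ne'
    _ ≤ (2 ^ 16) ^ S.card := by gcongr; norm_num
    _ = 2 ^ (16 * S.card) := (pow_mul _ _ _).symm
  exact_mod_cast this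

end IsArithmetic

end SmallSolutions

end UnitEquation

section NumberField

open NumberField.HeightOneSpectrum (adicAbv isNonarchimedean_adicAbv one_lt_absNorm_nnreal)

lemma infinite_heightOneSpectrum_of_isIntegral (R A : Type*) [CommRing R] [CommRing A] [IsDomain A]
    [Algebra R A] [FaithfulSMul R A] [Algebra.IsIntegral R A] [Infinite (HeightOneSpectrum R)] :
    Infinite (HeightOneSpectrum A) := by
  have := (FaithfulSMul.algebraMap_injective R A).isDomain
  refine Infinite.of_surjective (fun v : HeightOneSpectrum A ↦ v.under R) fun ⟨p, _, hp⟩ ↦ ?_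
  obtain ⟨P, hP, rfl⟩ := p.exists_ideal_over_prime_of_isIntegral_of_isDomain (S := A) (by simp)
  exact ⟨⟨P, hP, by aesop⟩, rfl⟩

variable {K : Type*} [Field K] [NumberField K]

lemma infinite_heightOneSpectrum (K : Type*) [Field K] [NumberField K] :
    Infinite (HeightOneSpectrum (𝓞 K)) :=
  have : Infinite (HeightOneSpectrum ℤ) :=
    Infinite.of_injective _ Rat.HeightOneSpectrum.primesEquiv.symm.injective
  infinite_heightOneSpectrum_of_isIntegral ℤ (𝓞 K)

lemma adicAbv_le_one_iff {v : HeightOneSpectrum (𝓞 K)} {x : K} :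
    adicAbv K v x ≤ 1 ↔ v.valuation K x ≤ 1 :=
  WithZeroMulInt.toNNReal_le_one_iff (one_lt_absNorm_nnreal v)

lemma finite_adicAbv_ne_one {x : K} (hx : x ≠ 0) :
    {v : HeightOneSpectrum (𝓞 K) | adicAbv K v x ≠ 1}.Finite := by
  convert (FinitePlace.hasFiniteMulSupport hx).preimage
    FinitePlace.equivHeightOneSpectrum.symm.injective.injOn using 1
  ext v
  simp [FinitePlace.equivHeightOneSpectrum_symm_apply, FinitePlace.norm_embedding]

lemma prod_mul_finprod_adicAbv_eq_one {x : K} (hx : x ≠ 0) :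
    (∏ w : InfinitePlace K, w x ^ w.mult) * ∏ᶠ v : HeightOneSpectrum (𝓞 K), adicAbv K v x = 1 := by
  rw [← prod_abs_eq_one hx, ← finprod_comp_equiv FinitePlace.equivHeightOneSpectrum.symm]
  simp only [FinitePlace.equivHeightOneSpectrum_symm_apply, FinitePlace.norm_embedding]

lemma mem_integer_iff {U : Finset (HeightOneSpectrum (𝓞 K))} {x : K} :
    x ∈ ((U : Set (HeightOneSpectrum (𝓞 K))).integer K).toSubring ↔
      ∀ v ∉ U, adicAbv K v x ≤ 1 := by
  simp only [adicAbv_le_one_iff]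
  rfl

lemma finprod_adicAbv_le_prod {U : Finset (HeightOneSpectrum (𝓞 K))} {x : K} (hx : x ≠ 0)
    (hxU : ∀ v ∉ U, adicAbv K v x ≤ 1) :
    ∏ᶠ v : HeightOneSpectrum (𝓞 K), adicAbv K v x ≤ ∏ v ∈ U, adicAbv K v x := by
  have support_subset : (Function.mulSupport fun v ↦ adicAbv K v x) ⊆
      (U ∪ (finite_adicAbv_ne_one hx).toFinset : Finset (HeightOneSpectrum (𝓞 K))) := fun v hv ↦
    Finset.mem_union_right _ ((finite_adicAbv_ne_one hx).mem_toFinset.mpr hv)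
  rw [finprod_eq_prod_of_mulSupport_subset _ support_subset,
    ← Finset.prod_sdiff Finset.subset_union_left]
  exact mul_le_of_le_one_left (Finset.prod_nonneg fun v _ ↦ (adicAbv K v).nonneg x)
    (Finset.prod_le_one (fun v _ ↦ (adicAbv K v).nonneg x)
      fun v hv ↦ hxU v (Finset.mem_sdiff.mp hv).2)

/-- The archimedean places of a number field together with the finite places in `U`. -/
noncomputable def places (U : Finset (HeightOneSpectrum (𝓞 K))) :
    InfinitePlace K ⊕ U → NormalizedPlace K
  | .inl w => .archimedean w.embedding w.mult InfinitePlace.mult_ne_zero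
  | .inr v => .nonarchimedean (adicAbv K v.1) (isNonarchimedean_adicAbv K v.1)

lemma sum_logNorm_places (U : Finset (HeightOneSpectrum (𝓞 K))) {x : K} (hx : x ≠ 0) :
    ∑ v, (places U v).logNorm x =
      Real.log ((∏ w : InfinitePlace K, w x ^ w.mult) * ∏ v ∈ U, adicAbv K v x) := by
  have infinite_ne_zero (w : InfinitePlace K) : w x ^ w.mult ≠ 0 :=
    pow_ne_zero _ ((map_ne_zero w).mpr hx)
  have finite_ne_zero (v : HeightOneSpectrum (𝓞 K)) : adicAbv K v x ≠ 0 := (adicAbv K v).ne_zero hx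
  rw [Real.log_mul (Finset.prod_ne_zero_iff.mpr fun w _ ↦ infinite_ne_zero w)
      (Finset.prod_ne_zero_iff.mpr fun v _ ↦ finite_ne_zero v),
    Real.log_prod fun w _ ↦ infinite_ne_zero w, Real.log_prod fun v _ ↦ finite_ne_zero v,
    Fintype.sum_sum_type, ← Finset.sum_coe_sort U]
  simp only [places, NormalizedPlace.logNorm, NormalizedPlace.norm_archimedean_apply,
    NormalizedPlace.norm_nonarchimedean_apply, InfinitePlace.norm_embedding_eq]

lemma isArithmetic_places (U T : Finset (HeightOneSpectrum (𝓞 K))) :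
    IsArithmetic (places U) (Finset.univ.disjSum (Finset.univ.filter (·.1 ∈ T)))
      ((U : Set (HeightOneSpectrum (𝓞 K))).integer K).toSubring where
  sum_logNorm_nonneg x hxU hx := by
    rw [sum_logNorm_places U hx]
    refine Real.log_nonneg ?_
    rw [← prod_mul_finprod_adicAbv_eq_one hx]
    gcongr
    exact finprod_adicAbv_le_prod hx (mem_integer_iff.mp hxU)
  exists_degree_ne_zero := ⟨.inl (Classical.arbitrary _), InfinitePlace.mult_ne_zero⟩
  mem_of_degree_ne_zero := by
    rintro (w | v) hv
    · exact Finset.inl_mem_disjSum.mpr (Finset.mem_univ w)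
    · exact absurd rfl hv

lemma isExceptionalUnit_integer {U : Finset (HeightOneSpectrum (𝓞 K))} {a : K} (ha : a ≠ 0)
    (ha' : 1 - a ≠ 0) (haU : ∀ v ∉ U, adicAbv K v a = 1) (haU' : ∀ v ∉ U, adicAbv K v (1 - a) = 1) :
    IsExceptionalUnit ((U : Set (HeightOneSpectrum (𝓞 K))).integer K).toSubring a where
  ne_zero := ha
  one_sub_ne_zero := ha'
  mem := mem_integer_iff.mpr fun v hv ↦ (haU v hv).le
  inv_mem := mem_integer_iff.mpr fun v hv ↦ by rw [map_inv₀, haU v hv, inv_one]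
  one_sub_inv_mem := mem_integer_iff.mpr fun v hv ↦ by rw [map_inv₀, haU' v hv, inv_one]

lemma unitLogs_places_inr {U : Finset (HeightOneSpectrum (𝓞 K))} (v : U) {a b : K}
    (h : adicAbv K v.1 a = adicAbv K v.1 b)
    (h' : adicAbv K v.1 (1 - a) = adicAbv K v.1 (1 - b)) :
    (places U (.inr v)).unitLogs a = (places U (.inr v)).unitLogs b := by
  funext i
  fin_cases i <;> simp [NormalizedPlace.unitLogs, NormalizedPlace.logNorm, unitTriple, places,
    NormalizedPlace.norm_nonarchimedean_apply, h, h']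

lemma card_le_of_adicAbv_eq (T : Finset (HeightOneSpectrum (𝓞 K))) {F : Finset K}
    (hF : ∀ a ∈ F, a ≠ 0 ∧ 1 - a ≠ 0)
    (hoff : ∀ a ∈ F, ∀ b ∈ F, ∀ v ∉ T,
      adicAbv K v a = adicAbv K v b ∧ adicAbv K v (1 - a) = adicAbv K v (1 - b)) :
    F.card ≤ 2 ^ (16 * (T.card + Fintype.card (InfinitePlace K))) := by
  have finite_support : (⋃ a ∈ F, {v : HeightOneSpectrum (𝓞 K) |
      adicAbv K v a ≠ 1 ∨ adicAbv K v (1 - a) ≠ 1}).Finite :=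
    F.finite_toSet.biUnion fun a ha ↦
      (finite_adicAbv_ne_one (hF a ha).1).union (finite_adicAbv_ne_one (hF a ha).2)
  set U := T ∪ finite_support.toFinset
  have eq_one : ∀ a ∈ F, ∀ v ∉ U, adicAbv K v a = 1 ∧ adicAbv K v (1 - a) = 1 := by
    intro a ha v hv
    by_contra h
    refine hv (Finset.mem_union_right _ (finite_support.mem_toFinset.mpr ?_))
    exact Set.mem_biUnion ha (not_and_or.mp h)
  have card_filter_le : (Finset.univ.filter fun v : U ↦ v.1 ∈ T).card ≤ T.card :=
    Finset.card_le_card_of_injOn Subtype.val (fun v hv ↦ (Finset.mem_filter.mp hv).2)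
      Subtype.val_injective.injOn
  refine ((isArithmetic_places U T).card_exceptionalUnits_le (fun a ha ↦
    isExceptionalUnit_integer (hF a ha).1 (hF a ha).2 (fun v hv ↦ (eq_one a ha v hv).1)
      fun v hv ↦ (eq_one a ha v hv).2) ?_).trans ?_
  · rintro a ha b hb (w | v) hv
    · simp at hv
    · obtain ⟨h, h'⟩ := hoff a ha b hb v.1 (by simpa using hv)
      exact unitLogs_places_inr v h h'
  · rw [Finset.card_disjSum, Finset.card_univ, add_comm]
    gcongr
    exact one_le_two

theorem encard_le_of_adicAbv_eq (T : Finset (HeightOneSpectrum (𝓞 K))) {X : Set K}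
    (hX : ∀ a ∈ X, a ≠ 0 ∧ 1 - a ≠ 0)
    (hoff : ∀ a ∈ X, ∀ b ∈ X, ∀ v ∉ T,
      adicAbv K v a = adicAbv K v b ∧ adicAbv K v (1 - a) = adicAbv K v (1 - b)) :
    X.encard ≤ (2 ^ (16 * (T.card + Fintype.card (InfinitePlace K))) : ℕ) := by
  by_contra! hlt
  obtain ⟨Y, hYX, hY⟩ := Set.exists_subset_encard_eq (Order.add_one_le_of_lt hlt)
  lift Y to Finset K using Set.finite_of_encard_eq_coe hY
  have := card_le_of_adicAbv_eq T (fun a ha ↦ hX a (hYX ha))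
    fun a ha b hb ↦ hoff a (hYX ha) b (hYX hb)
  rw [Set.encard_coe_eq_coe_finsetCard] at hY
  norm_cast at hY
  lia

end NumberField

section ProjectiveLine

open NumberField.HeightOneSpectrum (adicAbv adicAbv_def absNorm_ne_zero)

variable {K : Type*} [Field K]

/-- The determinant `[P, Q]` of the chosen homogeneous coordinates of two points of `ℙ¹(K)`. -/
noncomputable def bracket (P Q : P1 K) : K :=
  P.rep 0 * Q.rep 1 - P.rep 1 * Q.rep 0

lemma bracket_ne_zero {P Q : P1 K} (h : P ≠ Q) : bracket P Q ≠ 0 := by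
  have independent := (Projectivization.linearIndependent_pair_iff_ne).mpr h
  have unit : IsUnit (Matrix.of ![P.rep, Q.rep]) :=
    Matrix.linearIndependent_rows_iff_isUnit.mp independent
  rw [Matrix.isUnit_iff_isUnit_det, isUnit_iff_ne_zero, Matrix.det_fin_two] at unit
  exact unit

/-- The cross ratio of `Q 0`, `Q 1`, `Q 2` and `P`, as the affine coordinate of `P` which is
`0` at `Q 0`, `1` at `Q 1` and `∞` at `Q 2`. -/
noncomputable def crossRatio (Q : Fin 3 → P1 K) (P : P1 K) : K :=
  -(bracket (Q 1) (Q 2) / bracket (Q 0) (Q 1)) * (bracket P (Q 0) / bracket P (Q 2))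

variable {Q : Fin 3 → P1 K} {P : P1 K}

lemma one_sub_crossRatio (h₀₁ : Q 0 ≠ Q 1) (h₂ : P ≠ Q 2) :
    1 - crossRatio Q P =
      -(bracket (Q 2) (Q 0) / bracket (Q 0) (Q 1)) * (bracket P (Q 1) / bracket P (Q 2)) := by
  have := bracket_ne_zero h₀₁
  have := bracket_ne_zero h₂
  rw [crossRatio]
  field_simp
  simp only [bracket]
  ring

lemma crossRatio_ne_zero (hQ : Function.Injective Q) (hP : ∀ i, P ≠ Q i) : crossRatio Q P ≠ 0 :=
  mul_ne_zero
    (neg_ne_zero.mpr (div_ne_zero (bracket_ne_zero (hQ.ne (by decide)))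
      (bracket_ne_zero (hQ.ne (by decide)))))
    (div_ne_zero (bracket_ne_zero (hP 0)) (bracket_ne_zero (hP 2)))

lemma one_sub_crossRatio_ne_zero (hQ : Function.Injective Q) (hP : ∀ i, P ≠ Q i) :
    1 - crossRatio Q P ≠ 0 := by
  rw [one_sub_crossRatio (hQ.ne (by decide)) (hP 2)]
  exact mul_ne_zero
    (neg_ne_zero.mpr (div_ne_zero (bracket_ne_zero (hQ.ne (by decide)))
      (bracket_ne_zero (hQ.ne (by decide)))))
    (div_ne_zero (bracket_ne_zero (hP 1)) (bracket_ne_zero (hP 2)))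

lemma injOn_crossRatio (hQ : Function.Injective Q) : {P | P ≠ Q 2}.InjOn (crossRatio Q) := by
  intro P hP P' hP' h
  by_contra hne
  have h₀₁ := bracket_ne_zero (hQ.ne (show (0 : Fin 3) ≠ 1 by decide))
  have h₁₂ := bracket_ne_zero (hQ.ne (show (1 : Fin 3) ≠ 2 by decide))
  have h₂₀ := bracket_ne_zero (hQ.ne (show (2 : Fin 3) ≠ 0 by decide))
  have cross_mul := mul_left_cancel₀ (neg_ne_zero.mpr (div_ne_zero h₁₂ h₀₁)) h
  rw [div_eq_div_iff (bracket_ne_zero hP) (bracket_ne_zero hP')] at cross_mul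
  have plucker : bracket P (Q 0) * bracket P' (Q 2) - bracket P' (Q 0) * bracket P (Q 2) =
      -(bracket P P' * bracket (Q 2) (Q 0)) := by
    simp only [bracket]
    ring
  refine neg_ne_zero.mpr (mul_ne_zero (bracket_ne_zero hne) h₂₀) ?_
  rw [← plucker, cross_mul, sub_self]

variable [NumberField K] {v : HeightOneSpectrum (𝓞 K)}

lemma adicAbv_eq_absNorm_zpow {x : K} (hx : x ≠ 0) :
    adicAbv K v x = (v.asIdeal.absNorm : ℝ) ^ (-ordAt v x) := by
  rw [adicAbv_def, WithZeroMulInt.toNNReal_neg_apply _ ((v.valuation K).ne_zero_iff.mpr hx), ordAt,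
    dif_neg hx, neg_neg]
  push_cast
  rfl

lemma ne_and_ne_of_logDist_eq {Q R : P1 K} (hQR : Q ≠ R) (h : logDist v P Q = logDist v P R) :
    P ≠ Q ∧ P ≠ R := by
  constructor <;> rintro rfl
  · rw [logDist, if_pos rfl, logDist, if_neg hQR] at h
    exact WithTop.top_ne_coe h
  · rw [logDist, if_neg hQR.symm, logDist, if_pos rfl] at h
    exact WithTop.coe_ne_top h

-- The right-hand side does not depend on `P`.
lemma adicAbv_bracket_div_bracket {Q R : P1 K} (hQR : Q ≠ R)
    (h : logDist v P Q = logDist v P R) :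
    adicAbv K v (bracket P Q / bracket P R) = (v.asIdeal.absNorm : ℝ) ^
      (minOrd v (R.rep 0) (R.rep 1) - minOrd v (Q.rep 0) (Q.rep 1)) := by
  obtain ⟨hPQ, hPR⟩ := ne_and_ne_of_logDist_eq hQR h
  have norm_ne_zero : (v.asIdeal.absNorm : ℝ) ≠ 0 := by exact_mod_cast absNorm_ne_zero v
  rw [logDist, if_neg hPQ, logDist, if_neg hPR, WithTop.coe_inj, ← bracket, ← bracket] at h
  rw [map_div₀, adicAbv_eq_absNorm_zpow (bracket_ne_zero hPQ),
    adicAbv_eq_absNorm_zpow (bracket_ne_zero hPR), ← zpow_sub₀ norm_ne_zero]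
  congr 1
  lia

/-- The points `P` of `ℙ¹(K)` with `δ_v(P, Q 0) = δ_v(P, Q 1) = δ_v(P, Q 2)` for all finite places
`v` outside `T`. -/
def equidistantSet (T : Finset (HeightOneSpectrum (𝓞 K))) (Q : Fin 3 → P1 K) : Set (P1 K) :=
  {P | ∀ v ∉ T, logDist v P (Q 0) = logDist v P (Q 1) ∧ logDist v P (Q 1) = logDist v P (Q 2)}

variable {T : Finset (HeightOneSpectrum (𝓞 K))} {P' : P1 K}

lemma ne_of_mem_equidistantSet (hQ : Function.Injective Q) (hP : P ∈ equidistantSet T Q)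
    (i : Fin 3) : P ≠ Q i := by
  have := infinite_heightOneSpectrum K
  obtain ⟨v, hv⟩ := Infinite.exists_notMem_finset T
  obtain ⟨h₀₁, h₁₂⟩ := hP v hv
  fin_cases i
  · exact (ne_and_ne_of_logDist_eq (hQ.ne (by decide)) h₀₁).1
  · exact (ne_and_ne_of_logDist_eq (hQ.ne (by decide)) h₁₂).1
  · exact (ne_and_ne_of_logDist_eq (hQ.ne (by decide)) h₁₂).2

lemma adicAbv_crossRatio_eq (hQ : Function.Injective Q) (hP : P ∈ equidistantSet T Q)
    (hP' : P' ∈ equidistantSet T Q) (hv : v ∉ T) :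
    adicAbv K v (crossRatio Q P) = adicAbv K v (crossRatio Q P') := by
  have h₀₂ : Q 0 ≠ Q 2 := hQ.ne (by decide)
  simp only [crossRatio, map_mul, adicAbv_bracket_div_bracket h₀₂ ((hP v hv).1.trans (hP v hv).2),
    adicAbv_bracket_div_bracket h₀₂ ((hP' v hv).1.trans (hP' v hv).2)]

lemma adicAbv_one_sub_crossRatio_eq (hQ : Function.Injective Q) (hP : P ∈ equidistantSet T Q)
    (hP' : P' ∈ equidistantSet T Q) (hv : v ∉ T) :
    adicAbv K v (1 - crossRatio Q P) = adicAbv K v (1 - crossRatio Q P') := by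
  have h₁₂ : Q 1 ≠ Q 2 := hQ.ne (by decide)
  simp only [one_sub_crossRatio (hQ.ne (by decide)) (ne_of_mem_equidistantSet hQ hP 2),
    one_sub_crossRatio (hQ.ne (by decide)) (ne_of_mem_equidistantSet hQ hP' 2), map_mul,
    adicAbv_bracket_div_bracket h₁₂ (hP v hv).2, adicAbv_bracket_div_bracket h₁₂ (hP' v hv).2]

end ProjectiveLine

end ThreePoint

open ThreePoint

/-- **Three-Point Lemma C.** Given three distinct points `Q₁, Q₂, Q₃ ∈ ℙ¹(K)`, the set
`𝒯 = {P ∈ ℙ¹(K) : δ_𝔭(P,Q₁) = δ_𝔭(P,Q₂) = δ_𝔭(P,Q₃) ∀𝔭 ∉ S}` is finite with cardinality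
at most `B(|S|) = 2^{16|S|}`. -/
theorem three_point_lemma_C
    {K : Type*} [Field K] [NumberField K]
    (T : Finset (HeightOneSpectrum (𝓞 K)))
    (Q : Fin 3 → P1 K) (hQ : Function.Injective Q) :
    {P : P1 K | ∀ v ∉ T,
        logDist v P (Q 0) = logDist v P (Q 1) ∧
        logDist v P (Q 1) = logDist v P (Q 2)}.Finite ∧
      {P : P1 K | ∀ v ∉ T,
        logDist v P (Q 0) = logDist v P (Q 1) ∧
        logDist v P (Q 1) = logDist v P (Q 2)}.ncard ≤ Bconst (sCard K T) := by
  change (equidistantSet T Q).Finite ∧ (equidistantSet T Q).ncard ≤ Bconst (sCard K T)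
  have ne_Q (P) (hP : P ∈ equidistantSet T Q) : ∀ i, P ≠ Q i := ne_of_mem_equidistantSet hQ hP
  have inj : (equidistantSet T Q).InjOn (crossRatio Q) :=
    (injOn_crossRatio hQ).mono fun P hP ↦ ne_Q P hP 2
  rw [← Set.encard_le_coe_iff_finite_ncard_le, ← inj.encard_image]
  refine encard_le_of_adicAbv_eq T ?_ ?_
  · rintro _ ⟨P, hP, rfl⟩
    exact ⟨crossRatio_ne_zero hQ (ne_Q P hP), one_sub_crossRatio_ne_zero hQ (ne_Q P hP)⟩
  · rintro _ ⟨P, hP, rfl⟩ _ ⟨P', hP', rfl⟩ v hv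
    exact ⟨adicAbv_crossRatio_eq hQ hP hP' hv, adicAbv_one_sub_crossRatio_eq hQ hP hP' hv⟩
end

section
/- Let K be a number field, S a finite set of places of K containing all the archimedean ones, R_S the ring of S-integers, h the class number of R_S, and let a₁,…,a_h be integral ideals representing the ideal classes of R_S, with a_i^h = α_i R_S for S-integers α_i. Let L = K(ζ, α₁^{1/h}, …, α_h^{1/h}) where ζ is a primitive h-th root of unity, let 𝕊 be the places of L above S, R_𝕊 the ring of 𝕊-integers of L, and √(K*) the radical of K* in L*. Then there exists a choice of homogeneous coordinates [x_P : y_P] ∈ ℙ¹(L) for every point P ∈ ℙ¹(K) such that: (a) for every P, x_P, y_P ∈ √(K*) and x_P R_𝕊 + y_P R_𝕊 = R_𝕊; and (b) for all P, Q ∈ ℙ¹(K), x_P y_Q − y_P x_Q ∈ √(K*). -/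
open NumberField IsDedekindDomain MvPolynomial
open scoped Classical nonZeroDivisors

set_option synthInstance.maxHeartbeats 1000000
set_option maxHeartbeats 1000000

/-!
Write a nonzero fractional ideal of `R_S` as `I = g a_i`. Then `I ^ h = θ R_S` with `θ = g ^ h α_i`,
and `θ` has an `h`-th root `b = g α_i^{1/h}` in `L`. The `R_𝕊`-module spanned by `b⁻¹ I` has `h`-th
power `R_𝕊`, and is therefore equal to `R_𝕊` because `R_𝕊` is integrally closed. Taking for `I` the
fractional ideal generated by the coordinates of `P`, multiplication by `b⁻¹` makes these coprime,
and multiplies the cross terms by elements of the radical.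
-/

/-- The elements of `L` with a positive power in `K`, that is the radical `√(K*)` of `K*` in `L*`
together with `0`. -/
def radicalWithZero (K L : Type*) [CommSemiring K] [CommSemiring L] [Algebra K L] :
    Submonoid L where
  carrier := {z | ∃ n : ℕ, 0 < n ∧ ∃ k : K, algebraMap K L k = z ^ n}
  one_mem' := ⟨1, one_pos, 1, by simp⟩
  mul_mem' := by
    rintro x y ⟨m, hm, k, hk⟩ ⟨n, hn, l, hl⟩
    exact ⟨m * n, Nat.mul_pos hm hn, k ^ n * l ^ m, by
      rw [map_mul, map_pow, map_pow, hk, hl, mul_pow, pow_mul, pow_mul']⟩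

theorem algebraMap_mem_radicalWithZero {K L : Type*} [CommSemiring K] [CommSemiring L]
    [Algebra K L] (k : K) : algebraMap K L k ∈ radicalWithZero K L :=
  ⟨1, one_pos, k, (pow_one _).symm⟩

section SIntegers

variable {A K : Type*} [CommRing A] [IsDedekindDomain A] [Field K] [Algebra A K]
  [IsFractionRing A K]

instance isIntegrallyClosedIn_integer (S : Set (HeightOneSpectrum A)) :
    IsIntegrallyClosedIn (S.integer K) K := by
  refine Subring.isIntegrallyClosedIn_iff.2 fun x hx v hv ↦ ?_
  have hle : (S.integer K).toSubring ≤ (v.valuation K).integer := fun y hy ↦ hy v hv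
  exact (Valuation.integer.integers (v.valuation K)).mem_of_integral
    (hx.map_of_comp_eq (Subring.inclusion hle) (RingHom.id K) rfl)

variable {B L : Type*} [CommRing B] [IsDedekindDomain B] [Field L] [Algebra B L]
  [IsFractionRing B L] [Algebra A B] [Algebra.IsIntegral A B] [Module.IsTorsionFree A B]
  [Algebra K L] [Algebra A L] [IsScalarTower A K L] [IsScalarTower A B L]

theorem algebraMap_mem_integer {S : Set (HeightOneSpectrum A)} {S' : Set (HeightOneSpectrum B)}
    (hS : HeightOneSpectrum.under A ⁻¹' S ⊆ S') {x : K} (hx : x ∈ S.integer K) :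
    algebraMap K L x ∈ S'.integer L := by
  intro w hw
  have : w.asIdeal.LiesOver (w.under A).asIdeal := ⟨rfl⟩
  rw [← HeightOneSpectrum.valuation_liesOver L (w.under A) w]
  exact pow_le_one' (hx _ fun hv ↦ hw (hS hv)) _

end SIntegers

section CoprimeCoordinates

open scoped Pointwise
open FractionalIdeal

theorem submodule_eq_one_of_pow_eq_one {B L : Type*} [CommRing B] [CommRing L] [Algebra B L]
    [IsIntegrallyClosedIn B L] {M : Submodule B L} {n : ℕ} (hn : 0 < n) (hM : M ^ n = 1) :
    M = 1 := by
  have hle : M ≤ 1 := fun x hx ↦ by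
    obtain ⟨y, hy⟩ := Submodule.mem_one.1 (hM ▸ Submodule.pow_mem_pow M hx n)
    exact Submodule.mem_one.2 <|
      IsIntegrallyClosedIn.exists_algebraMap_eq_of_isIntegral_pow hn (hy ▸ isIntegral_algebraMap)
  refine hle.antisymm ?_
  calc 1 = M ^ n := hM.symm
    _ ≤ M ^ 1 := pow_le_pow_right_of_le_one' hle hn
    _ = M := pow_one M

theorem span_inv_smul_eq_one {R B L : Type*} [CommRing R] [CommRing B] [Field L]
    [Algebra R B] [Algebra R L] [Algebra B L] [IsScalarTower R B L] [IsIntegrallyClosedIn B L]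
    {s : Set L} {b : L} {n : ℕ} (hn : 0 < n) (hb : b ≠ 0)
    (hs : Submodule.span R s ^ n = Submodule.span R {b ^ n}) :
    Submodule.span B (b⁻¹ • s) = 1 := by
  have hs' : Submodule.span B (s ^ n) = Submodule.span B {b ^ n} := by
    rw [← Submodule.span_span_of_tower R B (s ^ n), ← Submodule.span_pow, hs,
      Submodule.span_span_of_tower]
  refine submodule_eq_one_of_pow_eq_one hn ?_
  rw [Submodule.span_pow, smul_pow, Submodule.span_smul, hs', ← Submodule.span_smul,
    Set.smul_set_singleton, smul_eq_mul, ← mul_pow, inv_mul_cancel₀ hb, one_pow,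
    ← Submodule.one_eq_span]

variable {R K L ι : Type*} [CommRing R] [Field K] [Algebra R K] [IsFractionRing R K]
  [Field L] [Algebra K L] [Algebra R L] [IsScalarTower R K L]

theorem span_range_inv_mul_eq_one {B : Type*} [CommRing B] [Algebra R B] [Algebra B L]
    [IsScalarTower R B L] [IsIntegrallyClosedIn B L] {κ : Type*} [Fintype κ] {v : κ → K} {n : ℕ}
    (hn : 0 < n) {b : L} (hb : b ≠ 0) {θ : K} (hθ : algebraMap K L θ = b ^ n)
    (hv : spanFinset R Finset.univ v ^ n = spanSingleton R⁰ θ) :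
    Submodule.span B (Set.range fun j ↦ b⁻¹ * algebraMap K L (v j)) = 1 := by
  have hspan : Submodule.span R (Set.range v) ^ n = Submodule.span R {θ} := by
    simpa using congrArg (fun J : FractionalIdeal R⁰ K ↦ (J : Submodule R K)) hv
  have hmap := congrArg (Submodule.map (IsScalarTower.toAlgHom R K L).toLinearMap) hspan
  rw [Submodule.map_pow, Submodule.map_span, Submodule.map_span, Set.image_singleton,
    ← Set.range_comp] at hmap
  convert span_inv_smul_eq_one (B := B) hn hb (hθ ▸ hmap) using 2
  ext
  simp [Set.mem_smul_set]

variable [IsDedekindDomain R]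

theorem exists_eq_spanSingleton_mul_of_classGroup_representatives {a : ι → Ideal R}
    (ha : ∀ i, a i ∈ (Ideal R)⁰) (hrep : ∀ c : ClassGroup R, ∃ i, ClassGroup.mk0 ⟨a i, ha i⟩ = c)
    {I : FractionalIdeal R⁰ K} (hI : I ≠ 0) :
    ∃ i, ∃ g : K, I = spanSingleton R⁰ g * a i := by
  obtain ⟨d, J, -, rfl⟩ := exists_eq_spanSingleton_mul I
  have hJ : J ∈ (Ideal R)⁰ := mem_nonZeroDivisors_of_ne_zero <| by
    rintro rfl
    simp at hI
  obtain ⟨i, hi⟩ := hrep (ClassGroup.mk0 ⟨J, hJ⟩)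
  obtain ⟨x, -, hxJ⟩ := (ClassGroup.mk0_eq_mk0_iff_exists_fraction_ring K).1 hi
  refine ⟨i, (algebraMap R K d)⁻¹ * x, ?_⟩
  rw [← hxJ, ← mul_assoc, spanSingleton_mul_spanSingleton]

theorem exists_pow_eq_spanSingleton {h : ℕ} (hpos : 0 < h) {a : ι → Ideal R}
    (ha : ∀ i, a i ∈ (Ideal R)⁰) (hrep : ∀ c : ClassGroup R, ∃ i, ClassGroup.mk0 ⟨a i, ha i⟩ = c)
    {α : ι → R} (hα : ∀ i, a i ^ h = Ideal.span {α i})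
    {β : ι → L} (hβ : ∀ i, β i ^ h = algebraMap R L (α i))
    {I : FractionalIdeal R⁰ K} (hI : I ≠ 0) :
    ∃ b : L, b ≠ 0 ∧ ∃ θ : K, algebraMap K L θ = b ^ h ∧ I ^ h = spanSingleton R⁰ θ := by
  obtain ⟨i, g, rfl⟩ := exists_eq_spanSingleton_mul_of_classGroup_representatives ha hrep hI
  have hpow : (spanSingleton R⁰ g * (a i : FractionalIdeal R⁰ K)) ^ h =
      spanSingleton R⁰ (g ^ h * algebraMap R K (α i)) := by
    rw [mul_pow, spanSingleton_pow, ← coeIdeal_pow, hα, coeIdeal_span_singleton,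
      spanSingleton_mul_spanSingleton]
  have hb : algebraMap K L (g ^ h * algebraMap R K (α i)) = (algebraMap K L g * β i) ^ h := by
    rw [map_mul, map_pow, mul_pow, hβ, IsScalarTower.algebraMap_apply R K L]
  refine ⟨algebraMap K L g * β i, fun h0 ↦ ?_, _, hb, hpow⟩
  rw [h0, zero_pow hpos.ne', map_eq_zero] at hb
  rw [hb, spanSingleton_zero] at hpow
  exact hI (pow_eq_zero_iff hpos.ne' |>.1 hpow)

theorem setOf_eq_coe_of_span_pair_eq_one {A L : Type*} [CommRing A] [CommRing L] [Algebra A L]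
    {B : Subalgebra A L} {x y : L} (hxy : Submodule.span B {x, y} = 1) :
    {z : L | ∃ r ∈ B, ∃ s ∈ B, z = x * r + y * s} = (B : Set L) := by
  ext z
  have hz : z ∈ Submodule.span B {x, y} ↔ z ∈ (1 : Submodule B L) := by rw [hxy]
  simpa [Submodule.mem_span_pair, Submodule.mem_one, Subalgebra.smul_def,
    Subalgebra.algebraMap_def, mul_comm, eq_comm] using hz

theorem rep_cross_ne_zero {P Q : P1 K} (hPQ : P ≠ Q) :
    P.rep 0 * Q.rep 1 - P.rep 1 * Q.rep 0 ≠ 0 := by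
  have hind := Projectivization.independent_iff.1
    ((Projectivization.independent_pair_iff_ne P Q).2 hPQ)
  let M : Matrix (Fin 2) (Fin 2) K := Projectivization.rep ∘ ![P, Q]
  have hM : IsUnit M.det :=
    (Matrix.isUnit_iff_isUnit_det M).1 (Matrix.linearIndependent_rows_iff_isUnit.1 hind)
  rw [Matrix.det_fin_two] at hM
  exact hM.ne_zero

theorem s_radical_coprime_coordinates_general {A : Type*} [CommRing A] [Algebra A L]
    (B : Subalgebra A L) [IsIntegrallyClosedIn B L]
    (hB : ∀ r : R, algebraMap R L r ∈ B) {h : ℕ} (hpos : 0 < h) {a : ι → Ideal R}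
    (ha : ∀ i, a i ∈ (Ideal R)⁰) (hrep : ∀ c : ClassGroup R, ∃ i, ClassGroup.mk0 ⟨a i, ha i⟩ = c)
    {α : ι → R} (hα : ∀ i, a i ^ h = Ideal.span {α i})
    {β : ι → L} (hβ : ∀ i, β i ^ h = algebraMap R L (α i)) :
    ∃ x y : P1 K → L,
      (∀ P, ∃ c : L, c ≠ 0 ∧
        x P = c * algebraMap K L (P.rep 0) ∧ y P = c * algebraMap K L (P.rep 1)) ∧
      (∀ P, x P ∈ radicalWithZero K L ∧ y P ∈ radicalWithZero K L) ∧
      (∀ P, {z : L | ∃ r ∈ B, ∃ s ∈ B, z = x P * r + y P * s} = (B : Set L)) ∧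
      (∀ P Q, P ≠ Q →
        x P * y Q - y P * x Q ≠ 0 ∧ x P * y Q - y P * x Q ∈ radicalWithZero K L) := by
  let : Algebra R B := ((algebraMap R L).codRestrict B hB).toAlgebra
  have : IsScalarTower R B L := .of_algebraMap_eq fun _ ↦ rfl
  have hscale (P : P1 K) : ∃ c ∈ radicalWithZero K L, c ≠ 0 ∧
      Submodule.span B {c * algebraMap K L (P.rep 0), c * algebraMap K L (P.rep 1)} = 1 := by
    have hI : spanFinset R Finset.univ P.rep ≠ 0 :=
      spanFinset_ne_zero.2 (by simpa using Function.ne_iff.1 P.rep_nonzero)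
    obtain ⟨b, hb, θ, hθ, hpow⟩ := exists_pow_eq_spanSingleton hpos ha hrep hα hβ hI
    refine ⟨b⁻¹, ⟨h, hpos, θ⁻¹, by rw [map_inv₀, hθ, inv_pow]⟩, inv_ne_zero hb, ?_⟩
    simpa [Set.range, Fin.exists_fin_two, Set.insert_def, eq_comm] using
      span_range_inv_mul_eq_one (B := B) hpos hb hθ hpow
  choose c hc hc0 hspan using hscale
  refine ⟨fun P ↦ c P * algebraMap K L (P.rep 0), fun P ↦ c P * algebraMap K L (P.rep 1),
    fun P ↦ ⟨c P, hc0 P, rfl, rfl⟩, fun P ↦ ?_, fun P ↦ ?_, fun P Q hPQ ↦ ?_⟩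
  · exact ⟨mul_mem (hc P) (algebraMap_mem_radicalWithZero _),
      mul_mem (hc P) (algebraMap_mem_radicalWithZero _)⟩
  · exact setOf_eq_coe_of_span_pair_eq_one (hspan P)
  · have hcross : c P * algebraMap K L (P.rep 0) * (c Q * algebraMap K L (Q.rep 1)) -
        c P * algebraMap K L (P.rep 1) * (c Q * algebraMap K L (Q.rep 0)) =
        c P * c Q * algebraMap K L (P.rep 0 * Q.rep 1 - P.rep 1 * Q.rep 0) := by
      simp only [map_sub, map_mul]
      ring
    rw [hcross]
    exact ⟨mul_ne_zero (mul_ne_zero (hc0 P) (hc0 Q))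
        ((_root_.map_ne_zero _).2 (rep_cross_ne_zero hPQ)),
      mul_mem (mul_mem (hc P) (hc Q)) (algebraMap_mem_radicalWithZero _)⟩

end CoprimeCoordinates

open TensorProduct in
/-- **Lemma (S-radical coprime coordinates).** Let `R_S` be the ring of `S`-integers of `K`,
`h` its class number, `a₁,…,a_h` integral ideal representatives of the ideal classes with
`aᵢ^h = αᵢ R_S`, and `L = K(ζ, α₁^{1/h}, …, α_h^{1/h})` with `ζ` a primitive `h`-th root of
unity. Let `𝕊` be the places of `L` above `S` and `R_𝕊` the `𝕊`-integers of `L`. Then every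
`P ∈ ℙ¹(K)` admits homogeneous coordinates `[x_P : y_P] ∈ ℙ¹(L)` such that
(a) `x_P, y_P` lie in the radical of `K` in `L` and `x_P R_𝕊 + y_P R_𝕊 = R_𝕊`, and
(b) for distinct `P, Q`, `x_P y_Q - y_P x_Q` lies in the radical of `K*` in `L*`. -/
theorem s_radical_coprime_coordinates
    {K : Type*} [Field K] [NumberField K]
    (T : Finset (HeightOneSpectrum (𝓞 K)))
    (RS : Subalgebra (𝓞 K) K)
    (hRS : RS = (T : Set (HeightOneSpectrum (𝓞 K))).integer K)
    [IsDedekindDomain ↥RS]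
    (h : ℕ) (hpos : 0 < h)
    (hcard : Nat.card (ClassGroup ↥RS) = h)
    (a : Fin h → Ideal ↥RS)
    (ha : ∀ i, a i ∈ (Ideal ↥RS)⁰)
    (hrep : ∀ c : ClassGroup ↥RS, ∃ i, ClassGroup.mk0 ⟨a i, ha i⟩ = c)
    (α : Fin h → ↥RS)
    (hα : ∀ i, a i ^ h = Ideal.span {α i})
    (L : Type*) [Field L] [NumberField L] [Algebra K L]
    (ζ : L) (hζ : IsPrimitiveRoot ζ h)
    (β : Fin h → L) (hβ : ∀ i, β i ^ h = algebraMap K L ((α i : K)))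
    (hL : IntermediateField.adjoin K ({ζ} ∪ Set.range β) = ⊤)
    (SS : Set (HeightOneSpectrum (𝓞 L)))
    (hSS : SS = {w | ∃ v ∈ T, Ideal.comap (algebraMap (𝓞 K) (𝓞 L)) w.asIdeal = v.asIdeal})
    (RSS : Subalgebra (𝓞 L) L) (hRSS : RSS = SS.integer L) :
    ∃ x y : P1 K → L,
      -- `[x_P : y_P]` are homogeneous coordinates for `P`, viewed in `ℙ¹(L)`
      (∀ P : P1 K, ∃ c : L, c ≠ 0 ∧
          x P = c * algebraMap K L (P.rep 0) ∧ y P = c * algebraMap K L (P.rep 1)) ∧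
      -- (a) the coordinates lie in the radical of `K` in `L` ...
      (∀ P : P1 K,
        (∃ n : ℕ, 0 < n ∧ ∃ k : K, algebraMap K L k = x P ^ n) ∧
        (∃ n : ℕ, 0 < n ∧ ∃ k : K, algebraMap K L k = y P ^ n)) ∧
      -- ... and `x_P R_𝕊 + y_P R_𝕊 = R_𝕊`
      (∀ P : P1 K,
        {z : L | ∃ r ∈ RSS, ∃ s ∈ RSS, z = x P * r + y P * s} = (RSS : Set L)) ∧
      -- (b) cross terms lie in the radical of `K*` in `L*`
      (∀ P Q : P1 K, P ≠ Q →
        x P * y Q - y P * x Q ≠ 0 ∧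
        ∃ n : ℕ, 0 < n ∧ ∃ k : K, algebraMap K L k = (x P * y Q - y P * x Q) ^ n) := by
  subst hRS hRSS
  have hmem (r : (T : Set (HeightOneSpectrum (𝓞 K))).integer K) :
      algebraMap ((T : Set (HeightOneSpectrum (𝓞 K))).integer K) L r ∈ SS.integer L :=
    algebraMap_mem_integer (fun w hw ↦ hSS ▸ ⟨_, hw, rfl⟩) r.2
  exact s_radical_coprime_coordinates_general (SS.integer L) hmem hpos ha hrep hα hβ
end
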